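/- arXiv:1202.0153 — 11 statements merged into one kernel-verified Lean document; each statement's English description precedes it below -/
import Mathlib

section
/- For every d ≥ 1, any family of pairwise non-overlapping closed unit balls in ℝ^d, all of which touch a fixed closed unit ball, has at most 3^d − 1 members. (That is, the kissing number κ(d) of ℝ^d satisfies κ(d) ≤ 3^d − 1.) -/
open MeasureTheory Metric Module in
/-- Packing bound by volume comparison: a `2`-separated finite family of points in the closed ball
of radius `2` has at most `3 ^ dim` members. -/
theorem card_le_three_pow_finrank {E ι : Type*} [NormedAddCommGroup E] [NormedSpace ℝ E]
    [FiniteDimensional ℝ E] [Fintype ι] (x₀ : E) (x : ι → E)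
    (hx : ∀ i, dist (x i) x₀ ≤ 2) (hsep : Pairwise fun i j => 2 ≤ dist (x i) (x j)) :
    Fintype.card ι ≤ 3 ^ finrank ℝ E := by
  borelize E
  let μ : Measure E := Measure.addHaar
  have hdisj : Pairwise (Function.onFun Disjoint fun i => ball (x i) 1) := fun i j hij =>
    ball_disjoint_ball (by linarith [hsep hij])
  have hsub : ⋃ i, ball (x i) 1 ⊆ ball x₀ 3 :=
    Set.iUnion_subset fun i => ball_subset_ball' (by linarith [hx i])
  have hvol : (Fintype.card ι : ENNReal) * μ (ball 0 1)
      ≤ ENNReal.ofReal (3 ^ finrank ℝ E) * μ (ball 0 1) := by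
    calc (Fintype.card ι : ENNReal) * μ (ball 0 1)
        = μ (⋃ i, ball (x i) 1) := by
          rw [measure_iUnion hdisj fun _ => measurableSet_ball, tsum_fintype]
          simp [Measure.addHaar_ball_center]
      _ ≤ μ (ball x₀ 3) := measure_mono hsub
      _ = _ := Measure.addHaar_ball_of_pos μ x₀ (by norm_num)
  have hcard := (ENNReal.mul_le_mul_iff_left (measure_ball_pos μ 0 one_pos).ne'
    measure_ball_lt_top.ne).1 hvol
  rw [← ENNReal.ofReal_natCast, ENNReal.ofReal_le_ofReal_iff (by positivity)] at hcard
  exact_mod_cast hcard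

/-- Kissing number bound: for `d ≥ 1`, any family of pairwise non-overlapping closed unit
balls in `ℝ^d`, all touching a fixed closed unit ball, has at most `3 ^ d - 1` members. -/
theorem kissing_number_le (d n : ℕ) (hd : 1 ≤ d)
    (c₀ : EuclideanSpace ℝ (Fin d)) (c : Fin n → EuclideanSpace ℝ (Fin d))
    (htouch : ∀ i : Fin n, dist (c i) c₀ = 2)
    (hsep : ∀ i j : Fin n, i ≠ j → 2 ≤ dist (c i) (c j)) :
    n ≤ 3 ^ d - 1 := by
  have h := card_le_three_pow_finrank (ι := Option (Fin n)) c₀ (fun o => o.elim c₀ c)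
    (by rintro (_ | i) <;> simp [htouch])
    (by
      rintro (_ | i) (_ | j) hij
      · exact absurd rfl hij
      · simp [dist_comm c₀, htouch]
      · simp [htouch]
      · exact hsep i j fun h => hij (congrArg some h))
  simp only [Fintype.card_option, Fintype.card_fin, finrank_euclideanSpace] at h
  omega
end

section
/- Let c₁, …, cₙ be points of ℝ^d and r₁, …, rₙ ≥ 1 real numbers with ‖cᵢ‖ = 1 + rᵢ for all i (so each ball of radius rᵢ centered at cᵢ touches the unit ball at the origin) and ‖cᵢ − cⱼ‖ ≥ rᵢ + rⱼ for all i ≠ j (the balls are pairwise non-overlapping). Then the points pᵢ = 2·cᵢ/‖cᵢ‖ satisfy ‖pᵢ‖ = 2 for all i and ‖pᵢ − pⱼ‖ ≥ 2 for all i ≠ j; that is, the unit balls centered at the pᵢ are pairwise non-overlapping and all touch the unit ball at the origin. -/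
section

variable {E : Type*} [NormedAddCommGroup E] [InnerProductSpace ℝ E]

/-- Two vectors of norm at least `2` at distance at least `‖x‖ + ‖y‖ - 2` subtend an angle of at
least `π / 3`, expressed through the inner product. -/
lemma two_mul_inner_le_norm_mul_norm {x y : E} (hx : 2 ≤ ‖x‖) (hy : 2 ≤ ‖y‖)
    (hxy : ‖x‖ + ‖y‖ - 2 ≤ ‖x - y‖) : 2 * inner ℝ x y ≤ ‖x‖ * ‖y‖ := by
  have hsq : (‖x‖ + ‖y‖ - 2) ^ 2 ≤ ‖x - y‖ ^ 2 :=
    pow_le_pow_left₀ (by linarith) hxy 2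
  rw [norm_sub_sq_real] at hsq
  nlinarith [mul_nonneg (sub_nonneg.2 hx) (sub_nonneg.2 hy)]

lemma norm_div_norm_smul {x : E} (hx : x ≠ 0) {t : ℝ} (ht : 0 ≤ t) : ‖(t / ‖x‖) • x‖ = t := by
  rw [norm_smul, Real.norm_of_nonneg (by positivity), div_mul_cancel₀ _ (norm_ne_zero_iff.2 hx)]

/-- Rescaling two nonzero vectors subtending an angle of at least `π / 3` to a common norm `t`
gives points at distance at least `t`. -/
lemma le_norm_div_norm_smul_sub {x y : E} (hx : x ≠ 0) (hy : y ≠ 0) {t : ℝ} (ht : 0 ≤ t)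
    (hxy : 2 * inner ℝ x y ≤ ‖x‖ * ‖y‖) : t ≤ ‖(t / ‖x‖) • x - (t / ‖y‖) • y‖ := by
  have hx' : 0 < ‖x‖ := norm_pos_iff.2 hx
  have hy' : 0 < ‖y‖ := norm_pos_iff.2 hy
  have hcos : 2 * (inner ℝ x y / (‖x‖ * ‖y‖)) ≤ 1 := by
    rw [← mul_div_assoc]
    exact div_le_one_of_le₀ hxy (by positivity)
  have hinner : inner ℝ ((t / ‖x‖) • x) ((t / ‖y‖) • y)
      = t ^ 2 * (inner ℝ x y / (‖x‖ * ‖y‖)) := by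
    rw [real_inner_smul_left, real_inner_smul_right]
    field_simp
  refine (sq_le_sq₀ ht (norm_nonneg _)).1 ?_
  rw [norm_sub_sq_real, norm_div_norm_smul hx ht, norm_div_norm_smul hy ht, hinner]
  nlinarith [mul_le_mul_of_nonneg_left hcos (sq_nonneg t)]

end

/-- Shrinking lemma: if balls of radii `rᵢ ≥ 1` centered at `cᵢ` touch the unit ball at the
origin (`‖cᵢ‖ = 1 + rᵢ`) and are pairwise non-overlapping, then the points
`pᵢ = 2 • cᵢ / ‖cᵢ‖` satisfy `‖pᵢ‖ = 2` and `‖pᵢ - pⱼ‖ ≥ 2` for `i ≠ j`. -/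
theorem shrinking_lemma_kissing (d n : ℕ) (c : Fin n → EuclideanSpace ℝ (Fin d))
    (r : Fin n → ℝ) (hr : ∀ i, 1 ≤ r i)
    (htouch : ∀ i, ‖c i‖ = 1 + r i)
    (hsep : ∀ i j : Fin n, i ≠ j → r i + r j ≤ ‖c i - c j‖) :
    (∀ i, ‖(2 / ‖c i‖) • c i‖ = 2) ∧
      (∀ i j : Fin n, i ≠ j → 2 ≤ ‖(2 / ‖c i‖) • c i - (2 / ‖c j‖) • c j‖) := by
  have hnorm : ∀ i, 2 ≤ ‖c i‖ := fun i => by linarith [hr i, htouch i]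
  have hne : ∀ i, c i ≠ 0 := fun i => norm_pos_iff.1 (by linarith [hnorm i])
  refine ⟨fun i => norm_div_norm_smul (hne i) zero_le_two, fun i j hij => ?_⟩
  refine le_norm_div_norm_smul_sub (hne i) (hne j) zero_le_two
    (two_mul_inner_le_norm_mul_norm (hnorm i) (hnorm j) ?_)
  linarith [hsep i j hij, htouch i, htouch j]
end

section
/- Let d ≥ 1 and let B₁, …, Bₙ (n ≥ 1) be pairwise non-overlapping closed balls in ℝ^d with positive radii. Then any ball of minimal radius among them touches at most 3^d − 1 of the other balls. -/
open MeasureTheory Metric Module in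
/-- A `1`-separated finite family in the closed unit ball has at most `3 ^ dim E` members, since
the balls of radius `1 / 2` around its points are disjoint and lie in the ball of radius `3 / 2`. -/
theorem card_le_three_pow_of_one_le_dist {ι E : Type*} [NormedAddCommGroup E] [NormedSpace ℝ E]
    [FiniteDimensional ℝ E] (s : Finset ι) (p : ι → E) (hs : ∀ i ∈ s, ‖p i‖ ≤ 1)
    (h : (s : Set ι).Pairwise fun i j => 1 ≤ dist (p i) (p j)) :
    s.card ≤ 3 ^ finrank ℝ E := by
  borelize E
  let μ : Measure E := Measure.addHaar
  have hdisj : (s : Set ι).PairwiseDisjoint fun i => ball (p i) (1 / 2 : ℝ) := by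
    intro i hi j hj hij
    exact ball_disjoint_ball (by linarith [h hi hj hij])
  have hsub : (⋃ i ∈ s, ball (p i) (1 / 2 : ℝ)) ⊆ ball (0 : E) (3 / 2) := by
    refine Set.iUnion₂_subset fun i hi => ball_subset_ball' ?_
    rw [dist_zero_right]
    linarith [hs i hi]
  have hvol : (s.card : ENNReal) * ENNReal.ofReal ((1 / 2) ^ finrank ℝ E) * μ (ball 0 1) ≤
      ENNReal.ofReal ((3 / 2) ^ finrank ℝ E) * μ (ball 0 1) := by
    calc
      _ = μ (⋃ i ∈ s, ball (p i) (1 / 2 : ℝ)) := by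
        rw [measure_biUnion_finset hdisj fun _ _ => measurableSet_ball]
        simp only [μ.addHaar_ball_of_pos _ (one_half_pos (α := ℝ)), Finset.sum_const,
          nsmul_eq_mul, mul_assoc]
      _ ≤ μ (ball (0 : E) (3 / 2)) := measure_mono hsub
      _ = _ := μ.addHaar_ball_of_pos _ (by norm_num)
  have hcard := ENNReal.toReal_le_of_le_ofReal (by positivity)
    ((ENNReal.mul_le_mul_iff_left (measure_ball_pos _ _ zero_lt_one).ne'
      measure_ball_lt_top.ne).1 hvol)
  have : (s.card : ℝ) ≤ 3 ^ finrank ℝ E := by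
    simpa [div_eq_mul_inv, mul_pow] using hcard
  exact mod_cast this

/-- If two non-overlapping balls of radii `a, b ≥ ρ` touch the ball of radius `ρ` around the
origin, then the unit vectors pointing to their centers are at distance at least `1`. -/
theorem one_le_dist_normalize_of_touching {E : Type*} [NormedAddCommGroup E] [NormedSpace ℝ E]
    {x y : E} {ρ a b : ℝ} (hρ : 0 < ρ) (ha : ρ ≤ a) (hb : ρ ≤ b) (hx : ‖x‖ = ρ + a)
    (hy : ‖y‖ = ρ + b) (hxy : a + b ≤ dist x y) : 1 ≤ dist (‖x‖⁻¹ • x) (‖y‖⁻¹ • y) := by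
  have hx0 : ‖x‖ ≠ 0 := by linarith
  have hy0 : ‖y‖ ≠ 0 := by linarith
  set u := ‖x‖⁻¹ • x with hu
  set v := ‖y‖⁻¹ • y with hv
  have hu1 : ‖u‖ = 1 := by rw [hu, norm_smul, norm_inv, norm_norm, inv_mul_cancel₀ hx0]
  have hv1 : ‖v‖ = 1 := by rw [hv, norm_smul, norm_inv, norm_norm, inv_mul_cancel₀ hy0]
  have hxu : x = (ρ + a) • u := by rw [hu, ← hx, smul_inv_smul₀ hx0]
  have hyv : y = (ρ + b) • v := by rw [hv, ← hy, smul_inv_smul₀ hy0]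
  clear_value u v
  have hdecomp : x - y = (a - ρ) • u - (b - ρ) • v + (2 * ρ) • (u - v) := by
    rw [hxu, hyv]
    module
  have hle : ‖x - y‖ ≤ (a - ρ) + (b - ρ) + 2 * ρ * ‖u - v‖ := by
    rw [hdecomp]
    refine (norm_add_le_of_le (norm_sub_le _ _) le_rfl).trans_eq ?_
    rw [norm_smul, norm_smul, norm_smul, hu1, hv1, Real.norm_of_nonneg (sub_nonneg.2 ha),
      Real.norm_of_nonneg (sub_nonneg.2 hb), Real.norm_of_nonneg (by positivity), mul_one, mul_one]
  rw [dist_eq_norm] at hxy ⊢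
  nlinarith


/-- In a family of `n ≥ 1` pairwise non-overlapping closed balls in `ℝ^d` (`d ≥ 1`) with
positive radii, a ball of minimal radius touches at most `3 ^ d - 1` of the other balls. -/
theorem smallest_ball_touches_at_most (d n : ℕ) (hd : 1 ≤ d) (hn : 1 ≤ n)
    (c : Fin n → EuclideanSpace ℝ (Fin d)) (r : Fin n → ℝ)
    (hr : ∀ i, 0 < r i)
    (hsep : ∀ i j : Fin n, i ≠ j → r i + r j ≤ dist (c i) (c j))
    (i₀ : Fin n) (hmin : ∀ i, r i₀ ≤ r i) :
    {j : Fin n | j ≠ i₀ ∧ dist (c i₀) (c j) = r i₀ + r j}.ncard ≤ 3 ^ d - 1 := by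
  classical
  set T : Finset (Fin n) := {j | j ≠ i₀ ∧ dist (c i₀) (c j) = r i₀ + r j} with hT
  have hi₀ : i₀ ∉ T := by simp [hT]
  have hnorm : ∀ j ∈ T, ‖c j - c i₀‖ = r i₀ + r j := fun j hj => by
    rw [← dist_eq_norm, dist_comm]
    exact (Finset.mem_filter.1 hj).2.2
  let p : Fin n → EuclideanSpace ℝ (Fin d) := fun j => ‖c j - c i₀‖⁻¹ • (c j - c i₀)
  have hp₀ : p i₀ = 0 := by simp [p]
  have hp : ∀ j ∈ T, ‖p j‖ = 1 := fun j hj => by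
    have : ‖c j - c i₀‖ ≠ 0 := by linarith [hnorm j hj, hr i₀, hr j]
    simp only [p, norm_smul, norm_inv, norm_norm, inv_mul_cancel₀ this]
  have hcard : (insert i₀ T).card ≤ 3 ^ d := by
    have := card_le_three_pow_of_one_le_dist (insert i₀ T) p ?_ ?_
    · rwa [finrank_euclideanSpace_fin] at this
    · intro j hj
      rcases Finset.mem_insert.1 hj with rfl | hj
      · simp [hp₀]
      · exact (hp j hj).le
    · rw [Finset.coe_insert, Set.pairwise_insert]
      refine ⟨fun j hj k hk hjk => ?_, fun j hj _ => ?_⟩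
      · exact one_le_dist_normalize_of_touching (hr i₀) (hmin j) (hmin k) (hnorm j hj)
          (hnorm k hk) (by simpa using hsep j k hjk)
      · simp [hp₀, hp j hj]
  rw [Finset.card_insert_of_notMem hi₀] at hcard
  have hset : {j : Fin n | j ≠ i₀ ∧ dist (c i₀) (c j) = r i₀ + r j} = (T : Set (Fin n)) := by
    simp [hT]
  rw [hset, Set.ncard_coe_finset]
  exact Nat.le_sub_one_of_lt hcard
end

section
/- Let d ≥ 1 and let k be a natural number such that every family of pairwise non-overlapping closed unit balls in ℝ^d all touching a single fixed closed unit ball has at most k members. Then every finite family of pairwise non-overlapping closed balls in ℝ^d with positive radii admits a proper colouring with k + 1 colours. (That is, χ(d) ≤ κ(d) + 1.) -/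
/-- If every set of neighbours of `a` on which `r` is at least `r a` has at most `k` elements, for
every `a`, then the finite graph is `(k + 1)`-colourable. -/
lemma SimpleGraph.colorable_of_card_le_of_weight {V α : Type*} [Finite V] [LinearOrder α]
    (G : SimpleGraph V) (r : V → α) (k : ℕ)
    (h : ∀ (a : V) (T : Finset V), (∀ x ∈ T, G.Adj a x ∧ r a ≤ r x) → T.card ≤ k) :
    G.Colorable (k + 1) := by
  classical
  have := Fintype.ofFinite V
  have key (s : Finset V) :
      ∃ f : V → Fin (k + 1), ∀ i ∈ s, ∀ j ∈ s, G.Adj i j → f i ≠ f j := by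
    induction s using Finset.induction_on_min_value r with
    | empty => exact ⟨fun _ ↦ 0, by simp⟩
    | insert a s has hmin ih =>
      obtain ⟨f, hf⟩ := ih
      have hT : (s.filter (G.Adj a)).card ≤ k :=
        h a _ fun x hx ↦ ⟨(Finset.mem_filter.1 hx).2, hmin x (Finset.mem_filter.1 hx).1⟩
      obtain ⟨z, -, hz⟩ : ∃ z ∈ Finset.univ, z ∉ (s.filter (G.Adj a)).image f := by
        apply Finset.exists_mem_notMem_of_card_lt_card
        rw [Finset.card_univ, Fintype.card_fin]
        exact Nat.lt_succ_of_le (Finset.card_image_le.trans hT)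
      have hz' (x : V) (hx : x ∈ s) (hax : G.Adj a x) : f x ≠ z := fun e ↦
        hz (Finset.mem_image.2 ⟨x, Finset.mem_filter.2 ⟨hx, hax⟩, e⟩)
      have hne (x : V) (hx : x ∈ s) : x ≠ a := fun e ↦ has (e ▸ hx)
      refine ⟨Function.update f a z, fun i hi j hj hij ↦ ?_⟩
      rcases Finset.mem_insert.1 hi with rfl | his <;> rcases Finset.mem_insert.1 hj with rfl | hjs
      · exact (G.irrefl hij).elim
      · simpa [hne j hjs] using (hz' j hjs hij).symm
      · simpa [hne i his] using hz' i his hij.symm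
      · simpa [hne i his, hne j hjs] using hf i his j hjs hij
  obtain ⟨f, hf⟩ := key Finset.univ
  exact ⟨SimpleGraph.Coloring.mk f fun {i j} hij ↦
    hf i (Finset.mem_univ i) j (Finset.mem_univ j) hij⟩

/-- Two non-overlapping balls of radii `a, b ≥ r` touching a ball of radius `r` centred at the
origin are seen from the origin at an angle of at least `π / 3`: after moving the centres radially
to distance `2`, they are at distance at least `2`. -/
lemma two_le_dist_radial_rescale {E : Type*} [NormedAddCommGroup E] [InnerProductSpace ℝ E]
    {u v : E} {r a b : ℝ} (hr : 0 < r) (ha : r ≤ a) (hb : r ≤ b)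
    (hu : ‖u‖ = r + a) (hv : ‖v‖ = r + b) (huv : a + b ≤ ‖u - v‖) :
    2 ≤ ‖(2 / ‖u‖) • u - (2 / ‖v‖) • v‖ := by
  have hu0 : 0 < ‖u‖ := by linarith
  have hv0 : 0 < ‖v‖ := by linarith
  have h1 : 2 * inner ℝ u v ≤ ‖u‖ * ‖v‖ := by
    have := norm_sub_sq_real u v
    have h2 : (a + b) ^ 2 ≤ ‖u - v‖ ^ 2 := by gcongr; linarith
    rw [hu, hv] at *
    nlinarith [mul_nonneg (sub_nonneg.2 ha) (sub_nonneg.2 hb)]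
  have h3 : inner ℝ u v / (‖u‖ * ‖v‖) ≤ 1 / 2 := by
    rw [div_le_iff₀ (by positivity)]; linarith
  have h4 : ‖(2 / ‖u‖) • u - (2 / ‖v‖) • v‖ ^ 2 = 8 - 8 * (inner ℝ u v / (‖u‖ * ‖v‖)) := by
    rw [norm_sub_sq_real, norm_smul, norm_smul, real_inner_smul_left, real_inner_smul_right,
      Real.norm_of_nonneg (by positivity), Real.norm_of_nonneg (by positivity)]
    field_simp
    ring
  refine le_of_sq_le_sq ?_ (norm_nonneg _)
  linarith

/-- If every family of pairwise non-overlapping closed unit balls in `ℝ^d` all touching a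
single fixed closed unit ball has at most `k` members, then every finite family of pairwise
non-overlapping closed balls in `ℝ^d` with positive radii admits a proper colouring with
`k + 1` colours: `χ(d) ≤ κ(d) + 1`. -/
theorem chi_le_kissing_add_one (d k : ℕ) (hd : 1 ≤ d)
    (hk : ∀ (m : ℕ) (c₀ : EuclideanSpace ℝ (Fin d)) (p : Fin m → EuclideanSpace ℝ (Fin d)),
      (∀ i, dist (p i) c₀ = 2) → (∀ i j : Fin m, i ≠ j → 2 ≤ dist (p i) (p j)) → m ≤ k) :
    ∀ (n : ℕ) (c : Fin n → EuclideanSpace ℝ (Fin d)) (r : Fin n → ℝ),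
      (∀ i, 0 < r i) →
      (∀ i j : Fin n, i ≠ j → r i + r j ≤ dist (c i) (c j)) →
      ∃ f : Fin n → Fin (k + 1),
        ∀ i j : Fin n, i ≠ j → dist (c i) (c j) = r i + r j → f i ≠ f j := by
  intro n c r hr hc
  let G : SimpleGraph (Fin n) :=
    { Adj i j := i ≠ j ∧ dist (c i) (c j) = r i + r j
      symm := ⟨fun i j h ↦ ⟨h.1.symm, by rw [dist_comm, h.2, add_comm]⟩⟩
      loopless := ⟨fun i h ↦ h.1 rfl⟩ }
  have hG : G.Colorable (k + 1) := by
    refine G.colorable_of_card_le_of_weight r k fun a T hT ↦ ?_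
    let e := T.equivFin.symm
    have hnorm (x : Fin n) (hx : x ∈ T) : ‖c x - c a‖ = r a + r x := by
      rw [← dist_eq_norm, dist_comm, (hT x hx).1.2]
    refine hk T.card 0 (fun i ↦ (2 / ‖c (e i) - c a‖) • (c (e i) - c a)) (fun i ↦ ?_)
      fun i j hij ↦ ?_
    · have h0 : 0 < ‖c (e i) - c a‖ := by
        rw [hnorm _ (e i).2]
        exact add_pos (hr _) (hr _)
      rw [dist_zero_right, norm_smul, Real.norm_of_nonneg (by positivity),
        div_mul_cancel₀ _ h0.ne']
    · rw [dist_eq_norm]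
      refine two_le_dist_radial_rescale (hr a) (hT _ (e i).2).2 (hT _ (e j).2).2
        (hnorm _ (e i).2) (hnorm _ (e j).2) ?_
      rw [sub_sub_sub_cancel_right, ← dist_eq_norm]
      exact hc _ _ fun h ↦ hij (e.injective (Subtype.ext h))
  obtain ⟨f⟩ := hG
  exact ⟨f, fun i j hij h ↦ f.valid ⟨hij, h⟩⟩
end

section
/- For every d ≥ 2 there exist d + 2 closed balls in ℝ^d, with centers c₀, …, c_{d+1} and positive radii r₀, …, r_{d+1}, that are pairwise touching: dist(cᵢ, cⱼ) = rᵢ + rⱼ for all i ≠ j. (One may take d + 1 equal balls with centers at the vertices of a regular simplex, having the side length of the simplex as their diameters, together with a suitable small ball centered at the centroid touching all of them.) -/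
/-- The distance from a standard basis vector to a point on the diagonal. -/
theorem EuclideanSpace.dist_single_const {ι : Type*} [Fintype ι] [DecidableEq ι] (i : ι) (t : ℝ) :
    dist (EuclideanSpace.single i (1 : ℝ)) (WithLp.toLp 2 fun _ : ι => t) =
      √(Fintype.card ι * t ^ 2 - 2 * t + 1) := by
  rw [dist_eq_norm, ← Real.sqrt_sq (norm_nonneg _), norm_sub_sq_real]
  simp [EuclideanSpace.inner_single_left, EuclideanSpace.norm_sq_eq]
  ring_nf

/-- The distance between two points on the diagonal. -/
theorem EuclideanSpace.dist_const_const {ι : Type*} [Fintype ι] (s t : ℝ) :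
    dist (WithLp.toLp 2 fun _ : ι => s) (WithLp.toLp 2 fun _ : ι => t) =
      √(Fintype.card ι) * |s - t| := by
  simp [EuclideanSpace.dist_eq, Real.dist_eq, Real.sqrt_sq_eq_abs]

/-- For every `d ≥ 2` there exist `d + 2` closed balls in `ℝ^d` with positive radii that are
pairwise touching. -/
theorem exists_mutually_touching_balls (d : ℕ) (hd : 2 ≤ d) :
    ∃ (c : Fin (d + 2) → EuclideanSpace ℝ (Fin d)) (r : Fin (d + 2) → ℝ),
      (∀ i, 0 < r i) ∧
      (∀ i j : Fin (d + 2), i ≠ j → dist (c i) (c j) = r i + r j) := by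
  -- A regular simplex of side `√2`: the standard basis and an apex on the diagonal.
  obtain ⟨w, hw, hdw⟩ : ∃ w : ℝ, 0 < w ∧ (d : ℝ) = w ^ 2 - 1 :=
    ⟨√(d + 1), by positivity, by rw [Real.sq_sqrt (by positivity)]; ring⟩
  have hd' : (2 : ℝ) ≤ d := by exact_mod_cast hd
  let apex : EuclideanSpace ℝ (Fin d) := WithLp.toLp 2 fun _ => -1 / (1 + w)
  let centroid : EuclideanSpace ℝ (Fin d) := WithLp.toLp 2 fun _ => 1 / (w * (1 + w))
  let e : Fin d → EuclideanSpace ℝ (Fin d) := fun i => EuclideanSpace.single i 1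
  have apex_centroid : dist apex centroid = √d / w := by
    have h : -1 / (1 + w) - 1 / (w * (1 + w)) = -(1 / w) := by field_simp; ring
    rw [EuclideanSpace.dist_const_const, h, abs_neg, abs_of_pos (by positivity),
      Fintype.card_fin]
    ring
  have e_apex (i : Fin d) : dist (e i) apex = √2 := by
    rw [EuclideanSpace.dist_single_const, Fintype.card_fin, hdw]
    congr 1
    field_simp
    ring
  have e_centroid (i : Fin d) : dist (e i) centroid = √d / w := by
    rw [EuclideanSpace.dist_single_const, Fintype.card_fin, ← Real.sqrt_sq hw.le,
      ← Real.sqrt_div (Nat.cast_nonneg d), Real.sqrt_sq hw.le, hdw]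
    congr 1
    field_simp
    ring
  have e_e (i j : Fin d) (hij : i ≠ j) : dist (e i) (e j) = √2 := by
    rw [dist_eq_norm, ← Real.sqrt_sq (norm_nonneg _), norm_sub_sq_real]
    simp [e, EuclideanSpace.inner_single_left, hij, one_add_one_eq_two]
  have radius_lt : √2 / 2 < √d / w := by
    rw [div_lt_div_iff₀ two_pos hw]
    refine lt_of_pow_lt_pow_left₀ 2 (by positivity) ?_
    rw [mul_pow, mul_pow, Real.sq_sqrt zero_le_two, Real.sq_sqrt (Nat.cast_nonneg d)]
    linarith
  refine ⟨Fin.cons centroid (Fin.cons apex e),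
    Fin.cons (√d / w - √2 / 2) fun _ => √2 / 2, ?_, ?_⟩
  · refine Fin.cases ?_ fun i => ?_
    · simpa using radius_lt
    · simp
  · intro i j hij
    induction i using Fin.cases with
    | zero =>
      induction j using Fin.cases with
      | zero => exact absurd rfl hij
      | succ j =>
        induction j using Fin.cases with
        | zero => simp [dist_comm centroid, apex_centroid]
        | succ j => simp [dist_comm centroid, e_centroid]
    | succ i =>
      induction j using Fin.cases with
      | zero =>
        induction i using Fin.cases with
        | zero => simp [apex_centroid]
        | succ i => simp [e_centroid]
      | succ j =>
        simp only [Fin.cons_succ, add_halves]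
        induction i using Fin.cases with
        | zero =>
          induction j using Fin.cases with
          | zero => exact absurd rfl hij
          | succ j => simp [dist_comm apex, e_apex]
        | succ i =>
          induction j using Fin.cases with
          | zero => simp [e_apex]
          | succ j => exact e_e i j fun h => hij (by rw [h])
end

section
/- For every d ≥ 2 there exists a finite family of pairwise non-overlapping closed balls in ℝ^d with positive radii that admits no proper colouring with d + 1 colours; consequently at least d + 2 colours are required, i.e. χ(d) ≥ d + 2. -/
/-- Pairwise touching balls admit no proper colouring with fewer colours than balls. -/
theorem exists_family_of_pairwise_touching {E ι : Type*} [MetricSpace E] [Fintype ι] {k : ℕ}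
    (hk : k < Fintype.card ι) (c : ι → E) (r : ι → ℝ) (hr : ∀ i, 0 < r i)
    (h : ∀ i j, i ≠ j → dist (c i) (c j) = r i + r j) :
    ∃ (n : ℕ) (c : Fin n → E) (r : Fin n → ℝ),
      (∀ i, 0 < r i) ∧
      (∀ i j : Fin n, i ≠ j → r i + r j ≤ dist (c i) (c j)) ∧
      ¬ ∃ f : Fin n → Fin k,
          ∀ i j : Fin n, i ≠ j → dist (c i) (c j) = r i + r j → f i ≠ f j := by
  let e := (Fintype.equivFin ι).symm
  have touch (i j) (hij : i ≠ j) : dist (c (e i)) (c (e j)) = r (e i) + r (e j) :=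
    h _ _ (e.injective.ne hij)
  refine ⟨Fintype.card ι, c ∘ e, r ∘ e, fun i => hr _, fun i j hij => (touch i j hij).ge, ?_⟩
  rintro ⟨f, hf⟩
  obtain ⟨i, j, hij, hfij⟩ := Fintype.exists_ne_map_eq_of_card_lt f (by simpa using hk)
  exact hf i j hij (touch i j hij) hfij

/-- The squared norm of a combination of a basis vector and the all-ones vector. -/
theorem EuclideanSpace.norm_sq_single_add_const {d : ℕ} (i : Fin d) (x y : ℝ) :
    ‖EuclideanSpace.single i x + WithLp.toLp 2 (fun _ : Fin d => y)‖ ^ 2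
      = x ^ 2 + 2 * x * y + d * y ^ 2 := by
  have hone : ‖WithLp.toLp 2 (fun _ : Fin d => y)‖ ^ 2 = d * y ^ 2 := by
    simp [EuclideanSpace.norm_sq_eq]
  rw [norm_add_sq_real, hone, EuclideanSpace.inner_single_left, PiLp.norm_single]
  simp
  ring

/-- The vertices of a regular simplex of edge length `√2` centred at the origin, together with
its centre: `none` is the centre and `some none` the vertex on the main diagonal. -/
noncomputable def simplexWithCenter (d : ℕ) : Option (Option (Fin d)) → EuclideanSpace ℝ (Fin d)
  | none => 0
  | some none => WithLp.toLp 2 (fun _ => 1 / √(d + 1))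
  | some (some i) =>
      EuclideanSpace.single i 1 + WithLp.toLp 2 (fun _ => -((1 + 1 / √(d + 1)) / d))

theorem norm_simplexWithCenter_some {d : ℕ} (hd : 0 < d) (i : Option (Fin d)) :
    ‖simplexWithCenter d (some i)‖ = √(d / (d + 1)) := by
  have hd' : (0 : ℝ) < d := by exact_mod_cast hd
  have hb : (1 / √((d : ℝ) + 1)) ^ 2 = 1 / (d + 1) := by
    rw [div_pow, Real.sq_sqrt (by positivity), one_pow]
  symm
  rw [Real.sqrt_eq_iff_eq_sq (by positivity) (norm_nonneg _)]
  rcases i with _ | i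
  · simp only [simplexWithCenter, EuclideanSpace.norm_sq_eq, Real.norm_eq_abs, sq_abs, hb]
    simp [div_eq_mul_inv]
  · rw [simplexWithCenter, EuclideanSpace.norm_sq_single_add_const]
    generalize 1 / √((d : ℝ) + 1) = b at hb
    field_simp at hb ⊢
    linear_combination -hb

theorem dist_simplexWithCenter_some {d : ℕ} (hd : 0 < d) {i j : Option (Fin d)} (hij : i ≠ j) :
    dist (simplexWithCenter d (some i)) (simplexWithCenter d (some j)) = √2 := by
  have hd' : (0 : ℝ) < d := by exact_mod_cast hd
  have hb : (1 / √((d : ℝ) + 1)) ^ 2 = 1 / (d + 1) := by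
    rw [div_pow, Real.sq_sqrt (by positivity), one_pow]
  have apex (i : Fin d) : dist (simplexWithCenter d (some (some i)))
      (simplexWithCenter d (some none)) = √2 := by
    symm
    rw [Real.sqrt_eq_iff_eq_sq (by positivity) dist_nonneg, dist_eq_norm, simplexWithCenter,
      simplexWithCenter, add_sub_assoc, ← WithLp.toLp_sub, Pi.sub_def,
      EuclideanSpace.norm_sq_single_add_const]
    generalize 1 / √((d : ℝ) + 1) = b at hb
    field_simp at hb ⊢
    linear_combination -(d + 1) * hb
  rcases i with _ | i <;> rcases j with _ | j
  · exact absurd rfl hij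
  · rw [dist_comm, apex]
  · exact apex i
  · have hne : i ≠ j := fun h => hij (congrArg some h)
    rw [simplexWithCenter, simplexWithCenter, dist_add_right]
    symm
    rw [Real.sqrt_eq_iff_eq_sq (by positivity) dist_nonneg, dist_eq_norm, norm_sub_sq_real,
      EuclideanSpace.inner_single_left]
    simp [hne]
    norm_num

/-- For every `d ≥ 2` there exists a finite family of pairwise non-overlapping closed balls
in `ℝ^d` with positive radii that admits no proper colouring with `d + 1` colours:
`χ(d) ≥ d + 2`. -/
theorem chi_ge_d_add_two (d : ℕ) (hd : 2 ≤ d) :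
    ∃ (n : ℕ) (c : Fin n → EuclideanSpace ℝ (Fin d)) (r : Fin n → ℝ),
      (∀ i, 0 < r i) ∧
      (∀ i j : Fin n, i ≠ j → r i + r j ≤ dist (c i) (c j)) ∧
      ¬ ∃ f : Fin n → Fin (d + 1),
          ∀ i j : Fin n, i ≠ j → dist (c i) (c j) = r i + r j → f i ≠ f j := by
  have hd0 : 0 < d := by omega
  have hlt : √2 / 2 < √((d : ℝ) / (d + 1)) := by
    have hd' : (2 : ℝ) ≤ d := by exact_mod_cast hd
    apply Real.lt_sqrt_of_sq_lt
    rw [div_pow, Real.sq_sqrt (by norm_num), div_lt_div_iff₀ (by norm_num) (by positivity)]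
    linarith
  refine exists_family_of_pairwise_touching (by simp) (simplexWithCenter d)
    (fun i => i.elim (√((d : ℝ) / (d + 1)) - √2 / 2) fun _ => √2 / 2) ?_ ?_
  · rintro (_ | i)
    · exact sub_pos.mpr hlt
    · exact div_pos (by positivity) two_pos
  · rintro (_ | i) (_ | j) hij
    · exact absurd rfl hij
    · rw [simplexWithCenter, dist_zero_left, norm_simplexWithCenter_some hd0]
      simp
    · rw [dist_comm, simplexWithCenter, dist_zero_left, norm_simplexWithCenter_some hd0]
      simp
    · rw [dist_simplexWithCenter_some hd0 fun h => hij (congrArg some h)]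
      simp
end

section
/- Let p₁, …, pₙ be points in the Euclidean plane ℝ² with ‖pᵢ‖ = 2 for all i and ‖pᵢ − pⱼ‖ ≥ 2 for all i ≠ j. Then n ≤ 6. (Equivalently, at most six pairwise non-overlapping unit discs can touch a given unit disc: κ(2) ≤ 6.) -/
/-- Two complex numbers of the same positive norm `r` whose arguments differ by less than `π / 3`
are at distance less than `r`. -/
theorem Complex.norm_sub_lt_of_abs_arg_sub_lt {z w : ℂ} {r : ℝ} (hr : 0 < r)
    (hz : ‖z‖ = r) (hw : ‖w‖ = r) (h : |z.arg - w.arg| < Real.pi / 3) : ‖z - w‖ < r := by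
  have hcos : 1 / 2 < Real.cos (z.arg - w.arg) := by
    rw [← Real.cos_abs, ← Real.cos_pi_div_three]
    exact Real.cos_lt_cos_of_nonneg_of_le_pi (abs_nonneg _) (by linarith [Real.pi_pos]) h
  have hsq : ‖z - w‖ ^ 2 = 2 * r ^ 2 - 2 * r ^ 2 * Real.cos (z.arg - w.arg) := by
    rw [Complex.sq_norm, Complex.normSq_apply, Complex.sub_re, Complex.sub_im,
      ← Complex.norm_mul_cos_arg z, ← Complex.norm_mul_sin_arg z, ← Complex.norm_mul_cos_arg w,
      ← Complex.norm_mul_sin_arg w, hz, hw, Real.cos_sub]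
    linear_combination r ^ 2 * Real.sin_sq_add_cos_sq z.arg + r ^ 2 * Real.sin_sq_add_cos_sq w.arg
  refine lt_of_pow_lt_pow_left₀ 2 hr.le ?_
  nlinarith [pow_pos hr 2]

/-- The half-open sector of angle `π / 3` (one of six) that contains a complex number. -/
noncomputable def Complex.sextant (z : ℂ) : ℤ := ⌈3 * z.arg / Real.pi⌉

theorem Complex.sextant_mem_Ioc (z : ℂ) : z.sextant ∈ Finset.Ioc (-3 : ℤ) 3 := by
  rw [Finset.mem_Ioc, sextant, Int.lt_ceil, Int.ceil_le, lt_div_iff₀ Real.pi_pos,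
    div_le_iff₀ Real.pi_pos]
  push_cast
  constructor <;> linarith [z.neg_pi_lt_arg, z.arg_le_pi]

theorem Complex.abs_arg_sub_lt_of_sextant_eq {z w : ℂ} (h : z.sextant = w.sextant) :
    |z.arg - w.arg| < Real.pi / 3 := by
  have hlt : |3 * z.arg / Real.pi - 3 * w.arg / Real.pi| < 1 := by
    have hcast : ((⌈3 * z.arg / Real.pi⌉ : ℤ) : ℝ) = ⌈3 * w.arg / Real.pi⌉ := congrArg _ h
    rw [abs_lt]
    constructor <;>
      linarith [Int.le_ceil (3 * z.arg / Real.pi), Int.ceil_lt_add_one (3 * z.arg / Real.pi),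
        Int.le_ceil (3 * w.arg / Real.pi), Int.ceil_lt_add_one (3 * w.arg / Real.pi)]
  rw [← sub_div, ← mul_sub, abs_div, abs_mul, abs_of_pos Real.pi_pos, div_lt_one Real.pi_pos,
    abs_of_pos (zero_lt_three' ℝ)] at hlt
  linarith

/-- At most six pairwise non-overlapping unit discs can touch a given unit disc in the
plane: if `‖pᵢ‖ = 2` for all `i` and `‖pᵢ - pⱼ‖ ≥ 2` for `i ≠ j`, then `n ≤ 6`. -/
theorem kissing_number_plane_le_six (n : ℕ) (p : Fin n → EuclideanSpace ℝ (Fin 2))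
    (hnorm : ∀ i, ‖p i‖ = 2)
    (hsep : ∀ i j : Fin n, i ≠ j → 2 ≤ ‖p i - p j‖) :
    n ≤ 6 := by
  let e : EuclideanSpace ℝ (Fin 2) ≃ₗᵢ[ℝ] ℂ := Complex.orthonormalBasisOneI.repr.symm
  have hinj : Function.Injective fun i => (e (p i)).sextant := by
    intro i j hij
    by_contra hne
    have hlt := Complex.norm_sub_lt_of_abs_arg_sub_lt two_pos
      ((e.norm_map _).trans (hnorm i)) ((e.norm_map _).trans (hnorm j))
      (Complex.abs_arg_sub_lt_of_sextant_eq hij)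
    rw [← map_sub, e.norm_map] at hlt
    exact (hsep i j hne).not_gt hlt
  simpa using Finset.card_le_card_of_injOn (s := Finset.univ) (t := Finset.Ioc (-3 : ℤ) 3)
    (fun i => (e (p i)).sextant) (fun i _ => Complex.sextant_mem_Ioc _) hinj.injOn
end

section
/- Let c₁, …, cₙ be points of ℝ² and r₁, …, rₙ ≥ 1 real numbers such that ‖cᵢ‖ = 1 + rᵢ for all i (each disc of radius rᵢ centered at cᵢ touches the unit disc at the origin) and ‖cᵢ − cⱼ‖ ≥ rᵢ + rⱼ for i ≠ j (the discs are pairwise non-overlapping). Then n ≤ 6. -/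
open Real in
/-- Two angles in the same half-open sector `(kπ/3, (k+1)π/3]` differ by less than `π/3`. -/
lemma half_lt_cos_sub_of_ceil_eq {a b : ℝ} (h : ⌈a / (π / 3)⌉ = ⌈b / (π / 3)⌉) :
    1 / 2 < cos (a - b) := by
  have hpi : 0 < π / 3 := by positivity
  have hab : |a - b| < π / 3 := by
    have hlt : |a / (π / 3) - b / (π / 3)| < 1 := by
      have ha := Int.ceil_lt_add_one (a / (π / 3))
      have hb := Int.ceil_lt_add_one (b / (π / 3))
      rw [abs_lt]
      constructor
      · linarith [h ▸ Int.le_ceil (b / (π / 3))]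
      · linarith [h ▸ Int.le_ceil (a / (π / 3))]
    rwa [← sub_div, abs_div, abs_of_pos hpi, div_lt_one hpi] at hlt
  rw [← cos_pi_div_three, ← cos_abs (a - b)]
  exact cos_lt_cos_of_nonneg_of_le_pi (abs_nonneg _) (by linarith) hab

open Real in
lemma Complex.ceil_arg_div_pi_div_three_mem (z : ℂ) :
    ⌈z.arg / (π / 3)⌉ ∈ Finset.Icc (-2 : ℤ) 3 := by
  have hpi : 0 < π / 3 := by positivity
  have hlow : (-3 : ℤ) < ⌈z.arg / (π / 3)⌉ := by
    rw [Int.lt_ceil, lt_div_iff₀ hpi]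
    push_cast
    linarith [z.neg_pi_lt_arg]
  have hhigh : ⌈z.arg / (π / 3)⌉ ≤ 3 := by
    rw [Int.ceil_le, div_le_iff₀ hpi]
    push_cast
    linarith [z.arg_le_pi]
  rw [Finset.mem_Icc]
  lia

/-- The law of cosines in terms of arguments of complex numbers. -/
lemma Complex.norm_sub_sq_eq_cos_arg_sub (z w : ℂ) :
    ‖z - w‖ ^ 2 = ‖z‖ ^ 2 + ‖w‖ ^ 2 - 2 * (‖z‖ * ‖w‖) * Real.cos (z.arg - w.arg) := by
  have hz : ‖z‖ ^ 2 = z.re ^ 2 + z.im ^ 2 := by rw [Complex.sq_norm, Complex.normSq_apply]; ring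
  have hw : ‖w‖ ^ 2 = w.re ^ 2 + w.im ^ 2 := by rw [Complex.sq_norm, Complex.normSq_apply]; ring
  have hinner : ‖z‖ * ‖w‖ * Real.cos (z.arg - w.arg) = z.re * w.re + z.im * w.im := by
    rw [Real.cos_sub, ← Complex.norm_mul_cos_arg z, ← Complex.norm_mul_cos_arg w,
      ← Complex.norm_mul_sin_arg z, ← Complex.norm_mul_sin_arg w]
    ring
  rw [mul_assoc, hinner, hz, hw, Complex.sq_norm, Complex.normSq_apply, Complex.sub_re,
    Complex.sub_im]
  ring

/-- Non-overlapping discs of radii at least `1` touching the unit disc at the origin are seen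
from the origin at an angle of at least `π/3`. -/
lemma Complex.cos_arg_sub_le_half_of_touch {z w : ℂ} {a b : ℝ} (ha : 1 ≤ a) (hb : 1 ≤ b)
    (hz : ‖z‖ = 1 + a) (hw : ‖w‖ = 1 + b) (h : a + b ≤ ‖z - w‖) :
    Real.cos (z.arg - w.arg) ≤ 1 / 2 := by
  have hsq : (a + b) ^ 2 ≤ ‖z - w‖ ^ 2 := by gcongr
  rw [Complex.norm_sub_sq_eq_cos_arg_sub, hz, hw] at hsq
  have hprod : 0 < (1 + a) * (1 + b) := by positivity
  refine le_of_mul_le_mul_left ?_ hprod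
  nlinarith [mul_nonneg (sub_nonneg.2 ha) (sub_nonneg.2 hb)]

/-- A smallest disc in a planar configuration has at most six neighbours: if discs of radii
`rᵢ ≥ 1` centered at `cᵢ` touch the unit disc at the origin and are pairwise
non-overlapping, then `n ≤ 6`. -/
theorem smallest_disc_at_most_six_neighbours (n : ℕ)
    (c : Fin n → EuclideanSpace ℝ (Fin 2)) (r : Fin n → ℝ)
    (hr : ∀ i, 1 ≤ r i)
    (htouch : ∀ i, ‖c i‖ = 1 + r i)
    (hsep : ∀ i j : Fin n, i ≠ j → r i + r j ≤ ‖c i - c j‖) :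
    n ≤ 6 := by
  by_contra! hn
  let φ := Complex.orthonormalBasisOneI.repr.symm
  obtain ⟨i, -, j, -, hij, hceil⟩ := Finset.exists_ne_map_eq_of_card_lt_of_maps_to
    (s := Finset.univ) (t := Finset.Icc (-2 : ℤ) 3)
    (f := fun i : Fin n => ⌈(φ (c i)).arg / (Real.pi / 3)⌉)
    (by simpa using hn) (fun i _ => Complex.ceil_arg_div_pi_div_three_mem _)
  refine (half_lt_cos_sub_of_ceil_eq hceil).not_ge
    (Complex.cos_arg_sub_le_half_of_touch (hr i) (hr j) ?_ ?_ ?_)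
  · rw [φ.norm_map, htouch]
  · rw [φ.norm_map, htouch]
  · rw [← map_sub, φ.norm_map]
    exact hsep i j hij
end

section
/- Let c₁, …, c₆ be six points of ℝ² and r₁, …, r₆ ≥ 1 real numbers such that ‖cᵢ‖ = 1 + rᵢ for all i (each disc of radius rᵢ centered at cᵢ touches the unit disc at the origin) and ‖cᵢ − cⱼ‖ ≥ rᵢ + rⱼ for i ≠ j (the discs are pairwise non-overlapping). Then rᵢ = 1 for every i; that is, if six non-overlapping discs of radius at least 1 touch a unit disc, all six must be unit discs. -/
/-- A nonnegative angle whose cosine is at most `1 / 2` is at least `π / 3`. -/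
theorem pi_div_three_le_of_cos_le_half {x : ℝ} (hx : 0 ≤ x) (h : Real.cos x ≤ 1 / 2) :
    Real.pi / 3 ≤ x := by
  by_contra! hlt
  have hcos : Real.cos (Real.pi / 3) < Real.cos x :=
    Real.cos_lt_cos_of_nonneg_of_le_pi hx (by linarith [Real.pi_pos]) hlt
  rw [Real.cos_pi_div_three] at hcos
  linarith

/-- Polar coordinates in the Euclidean plane. -/
theorem EuclideanSpace.exists_polar_coord (v : EuclideanSpace ℝ (Fin 2)) :
    ∃ t ∈ Set.Ioc (-Real.pi) Real.pi, v 0 = ‖v‖ * Real.cos t ∧ v 1 = ‖v‖ * Real.sin t := by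
  have hnorm : ‖(⟨v 0, v 1⟩ : ℂ)‖ = ‖v‖ := by
    rw [EuclideanSpace.norm_eq, Complex.norm_eq_sqrt_sq_add_sq]
    simp [Fin.sum_univ_two]
  refine ⟨Complex.arg ⟨v 0, v 1⟩, Complex.arg_mem_Ioc _, ?_, ?_⟩
  · rw [← hnorm, Complex.norm_mul_cos_arg]
  · rw [← hnorm, Complex.norm_mul_sin_arg]

/-- The law of cosines in polar coordinates. -/
theorem EuclideanSpace.norm_sub_sq_of_polar {v w : EuclideanSpace ℝ (Fin 2)} {s t : ℝ}
    (hv₀ : v 0 = ‖v‖ * Real.cos s) (hv₁ : v 1 = ‖v‖ * Real.sin s)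
    (hw₀ : w 0 = ‖w‖ * Real.cos t) (hw₁ : w 1 = ‖w‖ * Real.sin t) :
    ‖v - w‖ ^ 2 = ‖v‖ ^ 2 + ‖w‖ ^ 2 - 2 * ‖v‖ * ‖w‖ * Real.cos (s - t) := by
  have hexpand : ‖v - w‖ ^ 2 = (v 0 - w 0) ^ 2 + (v 1 - w 1) ^ 2 := by
    simp [EuclideanSpace.norm_sq_eq, Fin.sum_univ_two]
  rw [hexpand, hv₀, hv₁, hw₀, hw₁, Real.cos_sub]
  linear_combination ‖v‖ ^ 2 * Real.sin_sq_add_cos_sq s + ‖w‖ ^ 2 * Real.sin_sq_add_cos_sq t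

/-- If non-overlapping discs of radii `a, b ≥ 1` touch the unit disc, the cosine `x` of the angle
at its center is at most `1 / 2`, with equality only for unit discs. -/
theorem cos_le_half_of_touching {a b d x : ℝ} (ha : 1 ≤ a) (hb : 1 ≤ b) (hd : a + b ≤ d)
    (hcos : d ^ 2 = (1 + a) ^ 2 + (1 + b) ^ 2 - 2 * (1 + a) * (1 + b) * x) :
    x ≤ 1 / 2 ∧ (x = 1 / 2 → a = 1 ∧ b = 1) := by
  have hsq : (a + b) ^ 2 ≤ d ^ 2 := by gcongr
  have hab : 0 ≤ (a - 1) * (b - 1) := mul_nonneg (by linarith) (by linarith)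
  have hpos : 0 < (1 + a) * (1 + b) := by positivity
  have hkey : (1 + a) * (1 + b) * (x - 1 / 2) ≤
      -(3 / 2) * ((a - 1) * (b - 1)) - (a - 1) - (b - 1) := by
    nlinarith
  constructor
  · by_contra! hx
    nlinarith [mul_pos hpos (sub_pos.2 hx)]
  · rintro rfl
    constructor <;> linarith

/-- If six non-overlapping discs of radius at least 1 touch the unit disc at the origin,
then all six are unit discs. -/
theorem six_touching_discs_are_unit (c : Fin 6 → EuclideanSpace ℝ (Fin 2))
    (r : Fin 6 → ℝ)
    (hr : ∀ i, 1 ≤ r i)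
    (htouch : ∀ i, ‖c i‖ = 1 + r i)
    (hsep : ∀ i j : Fin 6, i ≠ j → r i + r j ≤ ‖c i - c j‖) :
    ∀ i, r i = 1 := by
  choose θ hθ hcos hsin using fun i => EuclideanSpace.exists_polar_coord (c i)
  have hpair (i j : Fin 6) (hij : i ≠ j) : Real.cos (θ i - θ j) ≤ 1 / 2 ∧
      (Real.cos (θ i - θ j) = 1 / 2 → r i = 1 ∧ r j = 1) := by
    refine cos_le_half_of_touching (hr i) (hr j) (hsep i j hij) ?_
    rw [← htouch i, ← htouch j]
    exact EuclideanSpace.norm_sub_sq_of_polar (hcos i) (hsin i) (hcos j) (hsin j)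
  set σ := Tuple.sort θ
  have hmono : Monotone (θ ∘ σ) := Tuple.monotone_sort θ
  have hgap (i j : Fin 6) (hij : i < j) : Real.pi / 3 ≤ θ (σ j) - θ (σ i) :=
    pi_div_three_le_of_cos_le_half (sub_nonneg.2 (hmono hij.le))
      (hpair _ _ (σ.injective.ne hij.ne')).1
  have hwrap : Real.pi / 3 ≤ θ (σ 0) - θ (σ 5) + 2 * Real.pi := by
    refine pi_div_three_le_of_cos_le_half ?_ ?_
    · linarith [(hθ (σ 0)).1, (hθ (σ 5)).2]
    · rw [Real.cos_add_two_pi]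
      exact (hpair _ _ (σ.injective.ne (by decide))).1
  have h01 := hgap 0 1 (by decide)
  have h12 := hgap 1 2 (by decide)
  have h23 := hgap 2 3 (by decide)
  have h34 := hgap 3 4 (by decide)
  have h45 := hgap 4 5 (by decide)
  have hunit (i j : Fin 6) (hij : i ≠ j) (h : θ (σ j) - θ (σ i) = Real.pi / 3) :
      r (σ j) = 1 ∧ r (σ i) = 1 :=
    (hpair _ _ (σ.injective.ne hij.symm)).2 (by rw [h, Real.cos_pi_div_three])
  obtain ⟨h1, h0⟩ := hunit 0 1 (by decide) (by linarith)
  obtain ⟨h3, h2⟩ := hunit 2 3 (by decide) (by linarith)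
  obtain ⟨h5, h4⟩ := hunit 4 5 (by decide) (by linarith)
  have hall (k : Fin 6) : r (σ k) = 1 := by
    fin_cases k <;> assumption
  intro i
  simpa using hall (σ.symm i)
end

section
/- Every finite nonempty family of pairwise non-overlapping closed discs in the plane ℝ² with positive radii contains at least one disc which touches at most five of the other discs in the family. -/
open Real in
theorem half_lt_cos_of_abs_lt {x : ℝ} (hx : |x| < π / 3) : 1 / 2 < cos x := by
  rw [← cos_pi_div_three, ← cos_abs x]
  exact cos_lt_cos_of_nonneg_of_le_pi (abs_nonneg x) (by linarith [pi_pos]) hx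

open Real in
/-- If at least six directions are pairwise at angle at least `π / 3`, then they are invariant
under rotation by `-π / 3`. -/
theorem exists_eq_sub_pi_div_three {ι : Type*} {s : Finset ι} {θ : ι → ℝ}
    (hcard : 6 ≤ s.card)
    (hcos : ∀ j ∈ s, ∀ k ∈ s, j ≠ k → cos (θ j - θ k) ≤ 1 / 2) {i : ι} (hi : i ∈ s) :
    ∃ j ∈ s, j ≠ i ∧ ∃ m : ℤ, θ j = θ i - π / 3 + m * (2 * π) := by
  classical
  have hpi := pi_pos
  -- `φ j` is the angle of `j` as seen from `i`, normalised to `[0, 2π)`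
  let φ : ι → ℝ := fun j ↦ toIcoMod two_pi_pos 0 (θ j - θ i)
  have hφ0 (j) : 0 ≤ φ j := (toIcoMod_mem_Ico' two_pi_pos _).1
  have hφ1 (j) : φ j < 2 * π := (toIcoMod_mem_Ico' two_pi_pos _).2
  have hφ (j) : ∃ m : ℤ, θ j - θ i = φ j + m * (2 * π) :=
    ⟨toIcoDiv two_pi_pos 0 (θ j - θ i), by
      rw [← zsmul_eq_mul]; exact (toIcoMod_add_toIcoDiv_zsmul two_pi_pos 0 _).symm⟩
  have hself : ∀ j ∈ s, j ≠ i → cos (φ j) ≤ 1 / 2 := by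
    intro j hj hji
    obtain ⟨m, hm⟩ := hφ j
    have := hcos j hj i hi hji
    rwa [hm, cos_add_int_mul_two_pi] at this
  have hpair : ∀ j ∈ s, ∀ k ∈ s, j ≠ k → cos (φ j - φ k) ≤ 1 / 2 := by
    intro j hj k hk hjk
    obtain ⟨m, hm⟩ := hφ j
    obtain ⟨l, hl⟩ := hφ k
    have := hcos j hj k hk hjk
    rwa [show θ j - θ k = φ j - φ k + ((m - l : ℤ) : ℝ) * (2 * π) by push_cast; linarith,
      cos_add_int_mul_two_pi] at this
  have hlow : ∀ j ∈ s, j ≠ i → π / 3 ≤ φ j := by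
    intro j hj hji
    by_contra! h
    have := half_lt_cos_of_abs_lt (x := φ j) (by rwa [abs_of_nonneg (hφ0 j)])
    linarith [hself j hj hji]
  have hupp : ∀ j ∈ s, j ≠ i → φ j ≤ 5 * (π / 3) := by
    intro j hj hji
    by_contra! h
    have := half_lt_cos_of_abs_lt (x := φ j - 2 * π)
      (by rw [abs_lt]; constructor <;> linarith [hφ1 j])
    rw [cos_sub_two_pi] at this
    linarith [hself j hj hji]
  let f : ι → ℤ := fun j ↦ ⌊φ j / (π / 3)⌋
  have hsub : (s.erase i).image f ⊆ Finset.Icc 1 5 := by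
    intro x hx
    obtain ⟨j, hj, rfl⟩ := Finset.mem_image.1 hx
    obtain ⟨hji, hj⟩ := Finset.mem_erase.1 hj
    refine Finset.mem_Icc.2 ⟨Int.le_floor.2 ?_, Int.lt_add_one_iff.1 (Int.floor_lt.2 ?_)⟩
    · rw [le_div_iff₀ (by positivity)]
      simpa using hlow j hj hji
    · rw [div_lt_iff₀ (by positivity)]
      have := hupp j hj hji
      push_cast
      linarith
  have hinj : Set.InjOn f (s.erase i) := by
    intro j hj k hk hjk
    by_contra hne
    have h := Int.abs_sub_lt_one_of_floor_eq_floor hjk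
    rw [← sub_div, abs_div, abs_of_pos (by positivity : 0 < π / 3),
      div_lt_one (by positivity)] at h
    have := hpair j (Finset.mem_of_mem_erase hj) k (Finset.mem_of_mem_erase hk) hne
    linarith [half_lt_cos_of_abs_lt h]
  have himage : (s.erase i).image f = Finset.Icc 1 5 := by
    refine Finset.eq_of_subset_of_card_le hsub ?_
    rw [Finset.card_image_of_injOn hinj, Finset.card_erase_of_mem hi, Int.card_Icc]
    norm_num
    omega
  obtain ⟨j, hj, hj5⟩ : ∃ j ∈ s.erase i, f j = 5 :=
    Finset.mem_image.1 (himage ▸ Finset.mem_Icc.2 ⟨by norm_num, le_rfl⟩)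
  obtain ⟨hji, hj⟩ := Finset.mem_erase.1 hj
  have h5 : 5 * (π / 3) ≤ φ j := by
    have := Int.floor_le (φ j / (π / 3))
    rw [show ⌊φ j / (π / 3)⌋ = 5 from hj5, le_div_iff₀ (by positivity)] at this
    simpa using this
  obtain ⟨m, hm⟩ := hφ j
  refine ⟨j, hj, hji, m + 1, ?_⟩
  push_cast
  linarith [hupp j hj hji]

theorem Complex.norm_sub_sq_eq_cos_arg (z w : ℂ) :
    ‖z - w‖ ^ 2 =
      ‖z‖ ^ 2 + ‖w‖ ^ 2 - 2 * ‖z‖ * ‖w‖ * Real.cos (z.arg - w.arg) := by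
  have h : ‖z‖ * ‖w‖ * Real.cos (z.arg - w.arg) = z.re * w.re + z.im * w.im := by
    rw [Real.cos_sub, ← norm_mul_cos_arg z, ← norm_mul_cos_arg w, ← norm_mul_sin_arg z,
      ← norm_mul_sin_arg w]
    ring
  have h' : 2 * ‖z‖ * ‖w‖ * Real.cos (z.arg - w.arg) = 2 * (z.re * w.re + z.im * w.im) := by
    rw [← h]; ring
  rw [h', Complex.sq_norm, Complex.sq_norm, Complex.sq_norm]
  simp only [normSq_apply, sub_re, sub_im]
  ring

/-- Two non-overlapping discs of radii `a, b ≥ ρ` touching a disc of radius `ρ` at the origin are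
seen from the origin at an angle at least `π / 3`. -/
theorem cos_arg_sub_le_half {z w : ℂ} {ρ a b : ℝ} (hρ : 0 < ρ) (ha : ρ ≤ a) (hb : ρ ≤ b)
    (hz : ‖z‖ = ρ + a) (hw : ‖w‖ = ρ + b) (hzw : a + b ≤ ‖z - w‖) :
    Real.cos (z.arg - w.arg) ≤ 1 / 2 := by
  have h := Complex.norm_sub_sq_eq_cos_arg z w
  have h2 : (a + b) ^ 2 ≤ ‖z - w‖ ^ 2 := pow_le_pow_left₀ (by linarith) hzw 2
  rw [hz, hw] at h
  by_contra! hc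
  have hAB : 0 < (ρ + a) * (ρ + b) := by nlinarith
  nlinarith [mul_lt_mul_of_pos_left hc hAB, mul_nonneg (sub_nonneg.2 ha) (sub_nonneg.2 hb),
    mul_nonneg hρ.le (sub_nonneg.2 ha), mul_nonneg hρ.le (sub_nonneg.2 hb)]

/-- The equality case of `cos_arg_sub_le_half`: both discs have radius `ρ`. -/
theorem radii_eq_of_cos_arg_sub_eq_half {z w : ℂ} {ρ a b : ℝ} (hρ : 0 < ρ) (ha : ρ ≤ a)
    (hb : ρ ≤ b) (hz : ‖z‖ = ρ + a) (hw : ‖w‖ = ρ + b) (hzw : a + b ≤ ‖z - w‖)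
    (hc : Real.cos (z.arg - w.arg) = 1 / 2) : a = ρ ∧ b = ρ := by
  have h := Complex.norm_sub_sq_eq_cos_arg z w
  have h2 : (a + b) ^ 2 ≤ ‖z - w‖ ^ 2 := pow_le_pow_left₀ (by linarith) hzw 2
  rw [hz, hw, hc] at h
  have h3 := mul_nonneg (sub_nonneg.2 ha) (sub_nonneg.2 hb)
  have h4 : ρ * ((a - ρ) + (b - ρ)) ≤ 0 := by nlinarith
  have h5 : (a - ρ) + (b - ρ) ≤ 0 := by
    by_contra! h6
    exact absurd (mul_pos hρ h6) h4.not_gt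
  constructor <;> linarith

theorem Complex.eq_neg_of_arg_eq_sub_pi {z w : ℂ} (hnorm : ‖w‖ = ‖z‖) {m : ℤ}
    (harg : w.arg = z.arg - Real.pi + m * (2 * Real.pi)) : w = -z := by
  apply Complex.ext
  · rw [neg_re, ← norm_mul_cos_arg w, ← norm_mul_cos_arg z, harg, Real.cos_add_int_mul_two_pi,
      Real.cos_sub_pi, hnorm, mul_neg]
  · rw [neg_im, ← norm_mul_sin_arg w, ← norm_mul_sin_arg z, harg, Real.sin_add_int_mul_two_pi,
      Real.sin_sub_pi, hnorm, mul_neg]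

/-- A disc of minimal radius whose centre is farthest from the origin among the discs of minimal
radius touches at most five others. -/
theorem card_touching_le_five_of_extremal {ι : Type*} {c : ι → ℂ} {r : ι → ℝ} {o : ι}
    (ho : 0 < r o) (hsep : ∀ i j, i ≠ j → r i + r j ≤ dist (c i) (c j))
    (hmin : ∀ j, r o ≤ r j) (hmax : ∀ j, r j = r o → ‖c j‖ ≤ ‖c o‖) {s : Finset ι}
    (hs : ∀ j ∈ s, dist (c o) (c j) = r o + r j) : s.card ≤ 5 := by
  by_contra! hcard
  let z : ι → ℂ := fun j ↦ c j - c o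
  have hz : ∀ j ∈ s, ‖z j‖ = r o + r j := fun j hj ↦ by
    rw [← hs j hj, dist_comm, dist_eq_norm]
  have hzz : ∀ j k, j ≠ k → r j + r k ≤ ‖z j - z k‖ := fun j k hjk ↦ by
    rw [sub_sub_sub_cancel_right, ← dist_eq_norm]; exact hsep j k hjk
  have hcos : ∀ j ∈ s, ∀ k ∈ s, j ≠ k → Real.cos ((z j).arg - (z k).arg) ≤ 1 / 2 :=
    fun j hj k hk hjk ↦
      cos_arg_sub_le_half ho (hmin j) (hmin k) (hz j hj) (hz k hk) (hzz j k hjk)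
  have hrot : ∀ i ∈ s, r i = r o ∧ ∃ j ∈ s, ∃ m : ℤ,
      (z j).arg = (z i).arg - Real.pi / 3 + m * (2 * Real.pi) := by
    intro i hi
    obtain ⟨j, hj, hji, m, hm⟩ :=
      exists_eq_sub_pi_div_three (θ := fun j ↦ (z j).arg) hcard hcos hi
    refine ⟨(radii_eq_of_cos_arg_sub_eq_half ho (hmin j) (hmin i) (hz j hj) (hz i hi)
      (hzz j i hji) ?_).2, j, hj, m, hm⟩
    rw [show (z j).arg - (z i).arg = -(Real.pi / 3) + m * (2 * Real.pi) by linarith,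
      Real.cos_add_int_mul_two_pi, Real.cos_neg, Real.cos_pi_div_three]
  obtain ⟨i, hi⟩ : s.Nonempty := Finset.card_pos.1 (by omega)
  obtain ⟨hri, j, hj, m₁, h₁⟩ := hrot i hi
  obtain ⟨-, k, hk, m₂, h₂⟩ := hrot j hj
  obtain ⟨-, l, hl, m₃, h₃⟩ := hrot k hk
  have hrl := (hrot l hl).1
  have hneg : z l = -z i :=
    Complex.eq_neg_of_arg_eq_sub_pi (m := m₁ + m₂ + m₃) (by rw [hz l hl, hz i hi, hri, hrl])
      (by push_cast; linarith)
  have hci : c i = c o + z i := (add_sub_cancel _ _).symm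
  have hcl : c l = c o - z i := by rw [sub_eq_add_neg, ← hneg]; exact (add_sub_cancel _ _).symm
  have hpar := parallelogram_law_with_norm ℝ (c o) (z i)
  rw [← hci, ← hcl] at hpar
  have hpos : 0 < ‖z i‖ := by rw [hz i hi]; linarith
  nlinarith [mul_self_le_mul_self (norm_nonneg _) (hmax i hri),
    mul_self_le_mul_self (norm_nonneg _) (hmax l hrl)]

/-- Every finite nonempty family of pairwise non-overlapping closed discs in the plane with
positive radii contains a disc touching at most five of the other discs. -/
theorem exists_disc_with_at_most_five_neighbours (n : ℕ) (hn : 1 ≤ n)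
    (c : Fin n → EuclideanSpace ℝ (Fin 2)) (r : Fin n → ℝ)
    (hr : ∀ i, 0 < r i)
    (hsep : ∀ i j : Fin n, i ≠ j → r i + r j ≤ dist (c i) (c j)) :
    ∃ i : Fin n, {j : Fin n | j ≠ i ∧ dist (c i) (c j) = r i + r j}.ncard ≤ 5 := by
  classical
  have : Nonempty (Fin n) := ⟨⟨0, hn⟩⟩
  obtain ⟨p, hp⟩ := Finite.exists_min r
  obtain ⟨o, ho, hmax⟩ := Finset.exists_max_image (Finset.univ.filter fun j ↦ r j = r p)
    (fun j ↦ ‖c j‖) ⟨p, by simp⟩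
  have hop : r o = r p := (Finset.mem_filter.1 ho).2
  let e := Complex.orthonormalBasisOneI.repr.symm
  refine ⟨o, ?_⟩
  rw [Set.ncard_eq_toFinset_card']
  refine card_touching_le_five_of_extremal (c := fun j ↦ e (c j)) (r := r) (o := o) (hr o)
    ?_ (fun j ↦ hop ▸ hp j) ?_ ?_
  · simpa only [e.dist_map] using hsep
  · intro j hj
    simpa only [e.norm_map] using hmax j (Finset.mem_filter.2 ⟨Finset.mem_univ j, hj.trans hop⟩)
  · intro j hj
    simpa only [e.dist_map] using (Set.mem_toFinset.1 hj).2
end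

section
/- Every finite family of pairwise non-overlapping closed balls in ℝ³ with positive radii admits a proper colouring with 13 colours; that is, χ(3) ≤ 13 (this follows from χ(3) ≤ κ(3) + 1 together with Newton's kissing number κ(3) = 12). -/
namespace KissingThree

/-! ### Computable trivariate integer polynomials -/

section ListPolynomials

variable {α : Type*}

/-- Coefficientwise addition of coefficient lists. -/
def addList (add : α → α → α) : List α → List α → List α
  | [], q => q
  | a :: p, [] => a :: p
  | a :: p, b :: q => add a b :: addList add p q

/-- Convolution product of coefficient lists. -/
def mulList (add mul : α → α → α) (zero : α) : List α → List α → List α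
  | [], _ => []
  | [a], q => q.map (mul a)
  | a :: b :: p, q => addList add (q.map (mul a)) (zero :: mulList add mul zero (b :: p) q)

/-- Value at `x` of a coefficient list whose coefficients are interpreted by `e`. -/
def evalList (e : α → ℝ) (x : ℝ) : List α → ℝ
  | [] => 0
  | a :: p => e a + x * evalList e x p

lemma evalList_addList {e : α → ℝ} {add : α → α → α} (hadd : ∀ a b, e (add a b) = e a + e b)
    (x : ℝ) (p q : List α) :
    evalList e x (addList add p q) = evalList e x p + evalList e x q := by
  induction p generalizing q with
  | nil => simp [addList, evalList]
  | cons a p ih =>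
    cases q with
    | nil => simp [addList, evalList]
    | cons b q => simp only [addList, evalList, hadd, ih]; ring

lemma evalList_map_mul {e : α → ℝ} {mul : α → α → α} (hmul : ∀ a b, e (mul a b) = e a * e b)
    (x : ℝ) (a : α) (q : List α) :
    evalList e x (q.map (mul a)) = e a * evalList e x q := by
  induction q with
  | nil => simp [evalList]
  | cons b q ih => simp only [List.map_cons, evalList, hmul, ih]; ring

lemma evalList_mulList {e : α → ℝ} {add mul : α → α → α} {zero : α}
    (hadd : ∀ a b, e (add a b) = e a + e b) (hmul : ∀ a b, e (mul a b) = e a * e b)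
    (hzero : e zero = 0) (x : ℝ) (p q : List α) :
    evalList e x (mulList add mul zero p q) = evalList e x p * evalList e x q := by
  induction p with
  | nil => simp [mulList, evalList]
  | cons a p ih =>
    cases p with
    | nil => simp [mulList, evalList_map_mul hmul, evalList]
    | cons b p =>
      rw [mulList, evalList_addList hadd, evalList_map_mul hmul, evalList, ih, hzero,
        evalList.eq_2 e x a]
      ring

lemma evalList_eq_sum {e : α → ℝ} {zero : α} (hzero : e zero = 0) (x : ℝ) {p : List α} {n : ℕ}
    (hn : p.length ≤ n) :
    evalList e x p = ∑ a ∈ Finset.range n, e (p.getD a zero) * x ^ a := by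
  induction p generalizing n with
  | nil => simp [evalList, hzero]
  | cons a p ih =>
    obtain _ | n := n
    · simp at hn
    · rw [Finset.sum_range_succ', evalList, ih (by simpa using hn), Finset.mul_sum, add_comm]
      congr 1
      · exact Finset.sum_congr rfl fun i _ => by simp only [List.getD_cons_succ]; ring
      · simp

end ListPolynomials

/-- Trivariate integer polynomials in `u, v, t`, as nested coefficient lists; the outermost index
is the exponent of `u`, the innermost one that of `t`. -/
abbrev TriPoly : Type := List (List (List ℤ))

namespace TriPoly

instance : Add TriPoly := ⟨addList (addList (addList (· + ·)))⟩

instance : Mul TriPoly :=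
  ⟨mulList (addList (addList (· + ·)))
    (mulList (addList (· + ·)) (mulList (· + ·) (· * ·) 0) []) []⟩

/-- Value of a polynomial at real arguments. -/
def eval (p : TriPoly) (u v t : ℝ) : ℝ :=
  evalList (evalList (evalList (fun n : ℤ => (n : ℝ)) t) v) u p

lemma eval_add (p q : TriPoly) (u v t : ℝ) :
    (p + q).eval u v t = p.eval u v t + q.eval u v t :=
  evalList_addList (evalList_addList (evalList_addList Int.cast_add t) v) u p q

lemma eval_mul (p q : TriPoly) (u v t : ℝ) :
    (p * q).eval u v t = p.eval u v t * q.eval u v t := by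
  have hadd := evalList_addList (e := fun n : ℤ => (n : ℝ)) Int.cast_add t
  have hmul := evalList_mulList (e := fun n : ℤ => (n : ℝ)) Int.cast_add Int.cast_mul
    Int.cast_zero t
  exact evalList_mulList (evalList_addList hadd v) (evalList_mulList hadd hmul rfl v) rfl u p q

/-- The constant polynomial. -/
def const (n : ℤ) : TriPoly := [[[n]]]

/-- The variable `u`. -/
def varU : TriPoly := [[], [[1]]]

/-- The variable `v`. -/
def varV : TriPoly := [[[], [1]]]

/-- The variable `t`. -/
def varT : TriPoly := [[[0, 1]]]

/-- The univariate polynomial with the given coefficients, in the variable `u`. -/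
def inU (l : List ℤ) : TriPoly := l.map fun c => [[c]]

/-- The univariate polynomial with the given coefficients, in the variable `v`. -/
def inV (l : List ℤ) : TriPoly := [l.map fun c => [c]]

/-- Iterated product. -/
def pow (p : TriPoly) : ℕ → TriPoly
  | 0 => const 1
  | k + 1 => p * pow p k

/-- Substitution of polynomials for the three variables. -/
def subst (x y z : TriPoly) (p : TriPoly) : TriPoly :=
  p.foldr (fun q r => q.foldr (fun l s => l.foldr (fun n h => const n + z * h) [] + y * s) [] +
    x * r) []

/-- The sum of a list of polynomials. -/
def listSum (l : List TriPoly) : TriPoly := l.foldr (· + ·) []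

lemma eval_const (n : ℤ) (u v t : ℝ) : (const n).eval u v t = n := by
  simp [const, eval, evalList]

lemma eval_inU (l : List ℤ) (u v t : ℝ) :
    (inU l).eval u v t = evalList (fun n : ℤ => (n : ℝ)) u l := by
  unfold eval inU
  induction l with
  | nil => rfl
  | cons a l ih => simp only [List.map_cons, evalList, ih]; ring

lemma eval_inV (l : List ℤ) (u v t : ℝ) :
    (inV l).eval u v t = evalList (fun n : ℤ => (n : ℝ)) v l := by
  simp only [eval, inV, evalList, mul_zero, add_zero]
  induction l with
  | nil => rfl
  | cons a l ih => simp only [List.map_cons, evalList, ih]; ring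

lemma eval_pow (p : TriPoly) (k : ℕ) (u v t : ℝ) : (p.pow k).eval u v t = p.eval u v t ^ k := by
  induction k with
  | zero => simp [pow, eval_const]
  | succ k ih => rw [pow, eval_mul, ih, pow_succ']

/-- The coefficient of `u ^ a * v ^ b * t ^ c`. -/
def coeff (p : TriPoly) (a b c : ℕ) : ℤ := ((p.getD a []).getD b []).getD c 0

/-- Every exponent of every variable is less than `n`. -/
def DegreeLT (p : TriPoly) (n : ℕ) : Prop :=
  p.length ≤ n ∧ ∀ q ∈ p, q.length ≤ n ∧ ∀ l ∈ q, l.length ≤ n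

instance (p : TriPoly) (n : ℕ) : Decidable (p.DegreeLT n) :=
  inferInstanceAs (Decidable (_ ∧ _))

lemma eval_eq_sum {p : TriPoly} {n : ℕ} (hp : p.DegreeLT n) (u v t : ℝ) :
    p.eval u v t = ∑ a ∈ Finset.range n, ∑ b ∈ Finset.range n, ∑ c ∈ Finset.range n,
      (p.coeff a b c : ℝ) * (u ^ a * v ^ b * t ^ c) := by
  have hlen {α : Type} {P : List α → Prop} (h0 : P []) (q : List (List α))
      (h : ∀ l ∈ q, P l) (a : ℕ) : P (q.getD a []) := by
    rcases lt_or_ge a q.length with ha | ha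
    · rw [List.getD_eq_getElem _ _ ha]; exact h _ (List.getElem_mem ha)
    · rwa [List.getD_eq_default _ _ ha]
  unfold eval
  rw [evalList_eq_sum (zero := []) rfl u hp.1]
  refine Finset.sum_congr rfl fun a _ => ?_
  have ha := hlen (P := fun q : List (List ℤ) => q.length ≤ n ∧ ∀ l ∈ q, l.length ≤ n)
    (by simp) p hp.2 a
  rw [evalList_eq_sum (zero := []) rfl v ha.1, Finset.sum_mul]
  refine Finset.sum_congr rfl fun b _ => ?_
  rw [evalList_eq_sum (zero := 0) Int.cast_zero t
    (hlen (P := fun l : List ℤ => l.length ≤ n) (by simp) _ ha.2 b), Finset.sum_mul,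
    Finset.sum_mul]
  refine Finset.sum_congr rfl fun c _ => ?_
  rw [coeff]; ring

/-- The sum of the coefficients of the monomials obtained by permuting three exponents. -/
def symCoeff (p : TriPoly) (a b c : ℕ) : ℤ :=
  p.coeff a b c + p.coeff a c b + p.coeff b a c + p.coeff b c a + p.coeff c a b + p.coeff c b a

end TriPoly

/-! ### The certificate

A rational solution of the three-point semidefinite program for thirteen points on the sphere,
in the variables `u = ⟪x i, x j⟫`, `v = ⟪x i, x l⟫`, `t = ⟪x j, x l⟫`. The certificate is a sum of
positive semidefinite kernels and weighted squares, so its sum over all triples of distinct points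
is nonnegative; its symmetrization has a dominating negative constant term. -/

open TriPoly

/-- The polynomial `t - u * v`. -/
def projInner : TriPoly := [[[0, 1]], [[], [-1]]]

/-- The polynomial `(1 - u ^ 2) * (1 - v ^ 2)`. -/
def projNormSq : TriPoly := [[[1], [], [-1]], [], [[-1], [], [1]]]

/-- The polynomial with value `Re (z ^ k)`, where `Re z = t - u * v` and
`|z| ^ 2 = (1 - u ^ 2) * (1 - v ^ 2)`. -/
def zonal : ℕ → TriPoly
  | 0 => const 1
  | 1 => projInner
  | k + 2 => const 2 * projInner * zonal (k + 1) + const (-1) * projNormSq * zonal k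

/-- The polynomial `1 - u ^ 2`. -/
def coSquare : TriPoly := [[[1]], [], [[-1]]]

/-- Twice eleven times the kernel `p u * p v * zonal k` together with its diagonal values, each
diagonal pair being shared by eleven triples. -/
def kernelTerm (d : ℕ × List ℤ) : TriPoly :=
  const 22 * (inU d.2 * inV d.2 * zonal d.1) +
    const 2 * (inU d.2 * inU d.2 * coSquare.pow d.1)

/-- A weighted square. -/
def weightedSquare (g q : TriPoly) : TriPoly := g * (q * q)

/-- Substitution of the elementary symmetric polynomials. -/
def substSymm (p : TriPoly) : TriPoly :=
  subst (varU + varV + varT) (varU * varV + varU * varT + varV * varT) (varU * varV * varT) p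

/-- The polynomial `v - t`. -/
def diffVT : TriPoly := varV + const (-1) * varT

/-- Substitution of `u`, `v + t` and `(v - t) ^ 2`. -/
def substSwap (p : TriPoly) : TriPoly := subst varU (varV + varT) (diffVT * diffVT) p

/-- The combination of the two lowest-degree generators of the standard type. -/
def stdCombination (d : TriPoly × TriPoly) : TriPoly :=
  (const 2 * varU + const (-1) * (varV + varT)) * substSymm d.1 +
    (const 2 * varU * varU + const (-1) * (varV * varV + varT * varT)) * substSymm d.2

/-- The polynomial `(1 - 2 * u) * (1 + u)`, times eleven. -/
def boxWeight : TriPoly := [[[11]], [[-11]], [[-22]]]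

/-- Degrees and coefficients of the univariate polynomials entering the kernels. -/
def kernelData : List (ℕ × List ℤ) :=
  [(0, [241287, 255917, -47459, -494398, -530537, 2177178]), (1, [-1379703, -2156073, -2876056,
  3305469, 4687022]), (1, [-261534, 3142110, 668714, -2075583, 0]), (2, [-1339273, 2541924,
  376026, -2095219]), (2, [153813, 0, 2049926, 958419]), (3, [547301, 2570651, 152261]), (3,
  [1650961, 0, 1386715]), (4, [-96559, 1287737]), (4, [1007631, 0])]

/-- Symmetric polynomials to be squared, in terms of the elementary symmetric ones. -/
def symData : List TriPoly :=
  [[[[31021, -2234874], [-946688, 1999769], [-3508482]], [[292174, -5459165], [1824539],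
  [-4010045]], [[336656, -3248078], [6264364]], [[-714621], [3857274]], [[-1498406]],
  [[-726979]]], [[[3345, -1455966], [-492495, -1896852], [-1459737]], [[13630, 1139195],
  [530226], [-192061]], [[-32515, 2004143], [0]], [[-218813], [-922875]], [[214493]],
  [[313025]]]]

/-- Polynomials of the standard type to be squared. -/
def stdData : List (TriPoly × TriPoly) :=
  [([[[-91384, 1524311], [-516425], [40865]], [[341484, 2547491], [-665923]], [[444926],
  [-53912]], [[-431326]], [[-157225]]], [[[323641, -1882788], [1258880]], [[-218690], [877854]],
  [[-126447]], [[-148919]]]), ([[[36569, -555983], [-138235], [-539830]], [[131155, 0],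
  [523317]], [[-95794], [335727]], [[-440697]], [[-151657]]], [[[179983, -584846], [351759]],
  [[399167], [703693]], [[90071]], [[-202934]]])]

/-- Polynomials even in `v - t`, whose squares are weighted by `boxWeight`. -/
def evenData : List TriPoly :=
  [[[[31741, 62918, -80840], [264717, -534661], [-13527, -390984], [-184669], [-70354]],
  [[470352, -88514], [128097, -320215], [-310138], [146246]], [[1757994, -8398], [49409],
  [17954]], [[2619959], [139395]], [[1246176]]], [[[-8055, -4652, 190395], [93790, 1156162],
  [52456, 494553], [-169778], [33326]], [[-393920, 1034153], [548799, 2061495], [295050],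
  [-456734]], [[-257710, 168118], [1029851], [-772099]], [[0], [337899]], [[606066]]], [[[25340,
  -99565, 107665], [157719, 313706], [-167720, 109441], [-160311], [168757]], [[53272, 126765],
  [1042663, 0], [-116345], [-764815]], [[241574, 121646], [510665], [-511578]], [[0], [-437159]],
  [[-214088]]], [[[-124829, -17206, 61892], [-915657, 848507], [-154748, 926106], [870743],
  [316639]], [[-688395, 359229], [0, 0], [694229], [-69615]], [[-545521, 632887], [427958],
  [-129878]], [[0], [-510684]], [[-346893]]]]

/-- Polynomials odd in `v - t` and divided by it, whose squares are weighted by `boxWeight`. -/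
def oddData : List TriPoly :=
  [[[[-580965, 570823], [1146785, 386316], [843436], [-178315]], [[-887422, 732261], [2871279],
  [883616]], [[-222957], [990172]], [[-135974]]], [[[711462, -511023], [-202792, -299455],
  [740906], [865848]], [[2005014, -735444], [0], [937221]], [[1839284], [1043691]], [[804280]]]]

/-- All summands of the certificate. -/
def certificateTerms : List TriPoly :=
  kernelData.map kernelTerm ++
    (symData.map substSymm ++ stdData.map stdCombination).map (weightedSquare (const 22)) ++
    (evenData.map substSwap ++ oddData.map fun p => diffVT * substSwap p).map
      (weightedSquare boxWeight)

/-- The certificate polynomial. -/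
def certificate : TriPoly := listSum certificateTerms

lemma certificate_check :
    certificate.DegreeLT 11 ∧
      certificate.symCoeff 0 0 0 + ∑ a ∈ Finset.range 11, ∑ b ∈ Finset.range 11,
        ∑ c ∈ Finset.range 11, ((certificate.symCoeff a b c).natAbs : ℤ) <
          (certificate.symCoeff 0 0 0).natAbs := by
  decide +kernel

/-! ### Sums over triples of distinct indices -/

open Finset

/-- The sum of `f (w i j) (w i l) (w j l)` over all triples of distinct indices. -/
noncomputable def tripleSum (w : Fin 13 → Fin 13 → ℝ) (f : ℝ → ℝ → ℝ → ℝ) : ℝ :=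
  ∑ i, ∑ j ∈ univ.erase i, ∑ l ∈ (univ.erase i).erase j, f (w i j) (w i l) (w j l)

section TripleSum

variable {w : Fin 13 → Fin 13 → ℝ}

lemma tripleSum_add (f g : ℝ → ℝ → ℝ → ℝ) :
    tripleSum w (fun u v t => f u v t + g u v t) = tripleSum w f + tripleSum w g := by
  simp only [tripleSum, sum_add_distrib]

lemma tripleSum_const_mul (c : ℝ) (f : ℝ → ℝ → ℝ → ℝ) :
    tripleSum w (fun u v t => c * f u v t) = c * tripleSum w f := by
  simp only [tripleSum, mul_sum]

lemma tripleSum_sum {ι : Type*} (s : Finset ι) (f : ι → ℝ → ℝ → ℝ → ℝ) :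
    tripleSum w (fun u v t => ∑ a ∈ s, f a u v t) = ∑ a ∈ s, tripleSum w (f a) := by
  classical
  induction s using Finset.induction_on with
  | empty => simp [tripleSum]
  | insert a s ha ih => simp only [sum_insert ha, tripleSum_add, ih]

lemma tripleSum_mono {f g : ℝ → ℝ → ℝ → ℝ}
    (h : ∀ i j l, i ≠ j → f (w i j) (w i l) (w j l) ≤ g (w i j) (w i l) (w j l)) :
    tripleSum w f ≤ tripleSum w g :=
  sum_le_sum fun i _ => sum_le_sum fun j hj => sum_le_sum fun l _ =>
    h i j l (ne_of_mem_erase hj).symm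

lemma tripleSum_swap_first (hw : ∀ i j, w i j = w j i) (f : ℝ → ℝ → ℝ → ℝ) :
    tripleSum w (fun u v t => f v u t) = tripleSum w f := by
  refine sum_congr rfl fun i _ => ?_
  rw [sum_comm' (t' := univ.erase i) (s' := fun l => (univ.erase i).erase l)
    (by simp only [mem_erase, mem_univ, and_true]; tauto)]
  exact sum_congr rfl fun j _ => sum_congr rfl fun l _ => by rw [hw l j]

lemma tripleSum_swap_last (hw : ∀ i j, w i j = w j i) (f : ℝ → ℝ → ℝ → ℝ) :
    tripleSum w (fun u v t => f u t v) = tripleSum w f := by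
  unfold tripleSum
  rw [sum_comm' (t' := univ) (s' := fun j => univ.erase j)
    (by simp only [mem_erase, mem_univ, and_true, true_and]; tauto)]
  refine sum_congr rfl fun j _ => sum_congr rfl fun i _ => ?_
  rw [erase_right_comm, hw i j]

/-- The sum of a monomial over all triples. -/
noncomputable def moment (w : Fin 13 → Fin 13 → ℝ) (a b c : ℕ) : ℝ :=
  tripleSum w fun u v t => u ^ a * v ^ b * t ^ c

lemma moment_swap_first (hw : ∀ i j, w i j = w j i) (a b c : ℕ) :
    moment w b a c = moment w a b c := by
  rw [moment, ← tripleSum_swap_first hw, moment]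
  simp only [mul_comm]

lemma moment_swap_last (hw : ∀ i j, w i j = w j i) (a b c : ℕ) :
    moment w a c b = moment w a b c := by
  rw [moment, ← tripleSum_swap_last hw, moment]
  simp only [mul_right_comm]

lemma abs_moment_le (hw : ∀ i j, |w i j| ≤ 1) (a b c : ℕ) : |moment w a b c| ≤ moment w 0 0 0 := by
  have key (i j l) : |w i j ^ a * w i l ^ b * w j l ^ c| ≤ 1 := by
    rw [abs_mul, abs_mul, abs_pow, abs_pow, abs_pow]
    exact mul_le_one₀ (mul_le_one₀ (pow_le_one₀ (abs_nonneg _) (hw i j)) (by positivity)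
      (pow_le_one₀ (abs_nonneg _) (hw i l))) (by positivity) (pow_le_one₀ (abs_nonneg _) (hw j l))
  have h := tripleSum_const_mul (w := w) (-1) fun u v t => u ^ 0 * v ^ 0 * t ^ 0
  refine abs_le.2 ⟨?_, ?_⟩
  · rw [moment, moment, ← neg_one_mul, ← h]
    exact tripleSum_mono fun i j l _ => by simpa using neg_le_of_abs_le (key i j l)
  · exact tripleSum_mono fun i j l _ => by simpa using le_of_abs_le (key i j l)

lemma moment_zero_pos : 0 < moment w 0 0 0 := by
  simp only [moment, tripleSum, pow_zero, mul_one]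
  refine sum_pos (fun i _ => sum_pos (fun j hj => sum_pos (fun l _ => one_pos) ?_) ?_)
    univ_nonempty
  · rw [← card_pos, card_erase_of_mem hj, card_erase_of_mem (mem_univ _), card_univ,
      Fintype.card_fin]
    norm_num
  · rw [← card_pos, card_erase_of_mem (mem_univ _), card_univ, Fintype.card_fin]
    norm_num

lemma tripleSum_eval {p : TriPoly} {n : ℕ} (hp : p.DegreeLT n) :
    tripleSum w p.eval = ∑ a ∈ range n, ∑ b ∈ range n, ∑ c ∈ range n,
      (p.coeff a b c : ℝ) * moment w a b c := by
  have h : p.eval = fun u v t => ∑ a ∈ range n, ∑ b ∈ range n, ∑ c ∈ range n,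
      (p.coeff a b c : ℝ) * (u ^ a * v ^ b * t ^ c) := by
    funext u v t; exact eval_eq_sum hp u v t
  simp only [h, tripleSum_sum, tripleSum_const_mul, moment]

lemma six_mul_tripleSum_eval (hw : ∀ i j, w i j = w j i) {p : TriPoly} {n : ℕ}
    (hp : p.DegreeLT n) :
    6 * tripleSum w p.eval = ∑ a ∈ range n, ∑ b ∈ range n, ∑ c ∈ range n,
      (p.symCoeff a b c : ℝ) * moment w a b c := by
  have first (f : ℕ → ℕ → ℕ → ℝ) :
      ∑ a ∈ range n, ∑ b ∈ range n, ∑ c ∈ range n, f b a c * moment w a b c =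
        ∑ a ∈ range n, ∑ b ∈ range n, ∑ c ∈ range n, f a b c * moment w a b c := by
    rw [sum_comm]
    simp only [moment_swap_first hw]
  have last (f : ℕ → ℕ → ℕ → ℝ) :
      ∑ a ∈ range n, ∑ b ∈ range n, ∑ c ∈ range n, f a c b * moment w a b c =
        ∑ a ∈ range n, ∑ b ∈ range n, ∑ c ∈ range n, f a b c * moment w a b c := by
    refine sum_congr rfl fun a _ => ?_
    rw [sum_comm]
    simp only [moment_swap_last hw]
  have h1 := last fun a b c => p.coeff a b c
  have h2 := first fun a b c => p.coeff a b c
  have h3 := last fun a b c => p.coeff b a c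
  have h4 := first fun a b c => p.coeff a c b
  have h5 := last fun a b c => p.coeff b c a
  simp only [symCoeff, Int.cast_add, add_mul, sum_add_distrib, tripleSum_eval hp]
  linarith

lemma tripleSum_certificate_neg (hw : ∀ i j, w i j = w j i) (hw1 : ∀ i j, |w i j| ≤ 1) :
    tripleSum w certificate.eval < 0 := by
  have hM := moment_zero_pos (w := w)
  set s : ℕ → ℕ → ℕ → ℝ := fun a b c => certificate.symCoeff a b c with hs
  have hdom : s 0 0 0 + ∑ a ∈ range 11, ∑ b ∈ range 11, ∑ c ∈ range 11, |s a b c| <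
      |s 0 0 0| := by
    have h := certificate_check.2
    simp only [Int.natCast_natAbs] at h
    simp only [hs]
    exact_mod_cast h
  have hle : ∀ a b c, s a b c * moment w a b c ≤ |s a b c| * moment w 0 0 0 := fun a b c =>
    (le_abs_self _).trans (by rw [abs_mul]; gcongr; exact abs_moment_le hw1 a b c)
  have hzero : |s 0 0 0| * moment w 0 0 0 - s 0 0 0 * moment w 0 0 0 ≤
      ∑ a ∈ range 11, ∑ b ∈ range 11, ∑ c ∈ range 11,
        (|s a b c| * moment w 0 0 0 - s a b c * moment w a b c) := by
    have h0 : 0 ∈ range 11 := by simp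
    have hnn : ∀ a b c, 0 ≤ |s a b c| * moment w 0 0 0 - s a b c * moment w a b c :=
      fun a b c => sub_nonneg.2 (hle a b c)
    exact ((single_le_sum (f := fun c => |s 0 0 c| * moment w 0 0 0 - s 0 0 c * moment w 0 0 c)
      (fun c _ => hnn 0 0 c) h0).trans
      (single_le_sum (f := fun b => ∑ c ∈ range 11,
        (|s 0 b c| * moment w 0 0 0 - s 0 b c * moment w 0 b c))
        (fun b _ => sum_nonneg fun c _ => hnn 0 b c) h0)).trans
      (single_le_sum (f := fun a => ∑ b ∈ range 11, ∑ c ∈ range 11,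
        (|s a b c| * moment w 0 0 0 - s a b c * moment w a b c))
        (fun a _ => sum_nonneg fun b _ => sum_nonneg fun c _ => hnn a b c) h0)
  have h6 := six_mul_tripleSum_eval hw certificate_check.1
  simp only [sum_sub_distrib, ← sum_mul] at hzero
  have := mul_lt_mul_of_pos_right hdom hM
  rw [add_mul] at this
  change _ = ∑ a ∈ range 11, ∑ b ∈ range 11, ∑ c ∈ range 11, s a b c * moment w a b c at h6
  linarith

end TripleSum

/-! ### Nonnegativity of the certificate on Gram matrices of codes on the sphere -/

/-- The recursion for `Re (z ^ k)` in terms of `s = Re z` and `m = |z| ^ 2`. -/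
def rePow (s m : ℝ) : ℕ → ℝ
  | 0 => 1
  | 1 => s
  | k + 2 => 2 * s * rePow s m (k + 1) - m * rePow s m k

lemma re_pow_eq (z : ℂ) (k : ℕ) : (z ^ k).re = rePow z.re (Complex.normSq z) k := by
  induction k using Nat.twoStepInduction with
  | zero => simp [rePow]
  | one => simp [rePow]
  | more k ih0 ih1 =>
    rw [rePow, ← ih0, ← ih1, pow_succ, pow_succ, Complex.normSq_apply]
    simp only [Complex.mul_re, Complex.mul_im]
    ring

lemma eval_zonal (k : ℕ) (u v t : ℝ) :
    (zonal k).eval u v t = rePow (t - u * v) ((1 - u ^ 2) * (1 - v ^ 2)) k := by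
  have hp : projInner.eval u v t = t - u * v := by
    simp [projInner, eval, evalList]; ring
  have hn : projNormSq.eval u v t = (1 - u ^ 2) * (1 - v ^ 2) := by
    simp [projNormSq, eval, evalList]; ring
  induction k using Nat.twoStepInduction with
  | zero => simp [zonal, rePow, eval_const]
  | one => rw [zonal, hp, rePow]
  | more k ih0 ih1 =>
    simp only [zonal, rePow, eval_add, eval_mul, eval_const, ih0, ih1, hp, hn]
    push_cast
    ring

/-- `w` is symmetric with unit diagonal and, after projecting along any index `i`, it is the Gram
matrix of vectors in a plane. -/
structure IsSphereGram (w : Fin 13 → Fin 13 → ℝ) : Prop where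
  symm : ∀ i j, w i j = w j i
  diag : ∀ i, w i i = 1
  exists_proj : ∀ i, ∃ z : Fin 13 → ℂ, ∀ j l,
    (z j * (starRingEnd ℂ) (z l)).re = w j l - w i j * w i l

namespace IsSphereGram

variable {w : Fin 13 → Fin 13 → ℝ}

lemma abs_le_one (hw : IsSphereGram w) (i j : Fin 13) : |w i j| ≤ 1 := by
  obtain ⟨z, hz⟩ := hw.exists_proj i
  have h := hz j j
  rw [Complex.mul_conj, Complex.ofReal_re, hw.diag] at h
  exact abs_le_one_iff_mul_self_le_one.2 (by linarith [Complex.normSq_nonneg (z j)])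

lemma kernel_sum_nonneg (hw : IsSphereGram w) (k : ℕ) (p : ℝ → ℝ) (i : Fin 13) :
    0 ≤ ∑ j ∈ univ.erase i, ∑ l ∈ univ.erase i, p (w i j) * p (w i l) *
      rePow (w j l - w i j * w i l) ((1 - w i j ^ 2) * (1 - w i l ^ 2)) k := by
  obtain ⟨z, hz⟩ := hw.exists_proj i
  have hnorm (j) : Complex.normSq (z j) = 1 - w i j ^ 2 := by
    have h := hz j j
    rw [Complex.mul_conj, Complex.ofReal_re, hw.diag] at h
    rw [h]; ring
  set S : ℂ := ∑ j ∈ univ.erase i, (p (w i j) : ℂ) * z j ^ k with hS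
  have h : (S * (starRingEnd ℂ) S).re = ∑ j ∈ univ.erase i, ∑ l ∈ univ.erase i,
      p (w i j) * p (w i l) *
        rePow (w j l - w i j * w i l) ((1 - w i j ^ 2) * (1 - w i l ^ 2)) k := by
    rw [hS, map_sum, sum_mul_sum, Complex.re_sum]
    refine sum_congr rfl fun j _ => ?_
    rw [Complex.re_sum]
    refine sum_congr rfl fun l _ => ?_
    have hm : Complex.normSq (z j * (starRingEnd ℂ) (z l)) =
        (1 - w i j ^ 2) * (1 - w i l ^ 2) := by
      rw [Complex.normSq_mul, Complex.normSq_conj, hnorm, hnorm]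
    rw [← hz j l, ← hm, ← re_pow_eq, ← Complex.re_ofReal_mul]
    congr 1
    simp only [map_mul, map_pow, Complex.conj_ofReal, Complex.ofReal_mul]
    ring
  rw [← h, Complex.mul_conj, Complex.ofReal_re]
  exact Complex.normSq_nonneg S

lemma rePow_self (s : ℝ) (k : ℕ) : rePow s (s * s) k = s ^ k := by
  have h := re_pow_eq (s : ℂ) k
  rwa [Complex.ofReal_re, Complex.normSq_ofReal, ← Complex.ofReal_pow, Complex.ofReal_re,
    eq_comm] at h

lemma tripleSum_kernelTerm_nonneg (hw : IsSphereGram w) (d : ℕ × List ℤ) :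
    0 ≤ tripleSum w (kernelTerm d).eval := by
  obtain ⟨k, q⟩ := d
  set p : ℝ → ℝ := fun x => evalList (fun n : ℤ => (n : ℝ)) x q with hp
  set F : Fin 13 → Fin 13 → Fin 13 → ℝ := fun i j l => p (w i j) * p (w i l) *
      rePow (w j l - w i j * w i l) ((1 - w i j ^ 2) * (1 - w i l ^ 2)) k with hF
  have heval (i j l) : (kernelTerm (k, q)).eval (w i j) (w i l) (w j l) =
      22 * F i j l + 2 * F i j j := by
    have hsq : (coSquare.pow k).eval (w i j) (w i l) (w j l) =
        rePow (w j j - w i j * w i j) ((1 - w i j ^ 2) * (1 - w i j ^ 2)) k := by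
      rw [hw.diag, ← sq, rePow_self, eval_pow]
      congr 1
      simp [coSquare, eval, evalList]; ring
    simp only [kernelTerm, eval_add, eval_mul, eval_const, eval_inU, eval_inV, eval_zonal, hsq,
      hF, hp]
    push_cast
    ring
  refine sum_nonneg fun i _ => ?_
  have hcard {j} (hj : j ∈ univ.erase i) : (#((univ.erase i).erase j) : ℝ) = 11 := by
    rw [card_erase_of_mem hj, card_erase_of_mem (mem_univ _), card_univ, Fintype.card_fin]
    norm_num
  have hsum : ∑ j ∈ univ.erase i, ∑ l ∈ (univ.erase i).erase j, (22 * F i j l + 2 * F i j j) =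
      22 * ∑ j ∈ univ.erase i, ∑ l ∈ univ.erase i, F i j l := by
    rw [mul_sum]
    refine sum_congr rfl fun j hj => ?_
    rw [sum_add_distrib, sum_const, nsmul_eq_mul, hcard hj, ← mul_sum, ← add_sum_erase _ _ hj]
    ring
  simp only [heval, hsum]
  exact mul_nonneg (by norm_num) (hw.kernel_sum_nonneg k p i)

lemma tripleSum_certificate_nonneg (hw : IsSphereGram w) (hle : ∀ i j, i ≠ j → w i j ≤ 1 / 2) :
    0 ≤ tripleSum w certificate.eval := by
  have hlist (L : List TriPoly) (hL : ∀ p ∈ L, 0 ≤ tripleSum w p.eval) :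
      0 ≤ tripleSum w (listSum L).eval := by
    induction L with
    | nil => simp [listSum, tripleSum, eval, evalList]
    | cons p L ih =>
      have h : (listSum (p :: L)).eval = fun u v t => p.eval u v t + (listSum L).eval u v t := by
        funext u v t; exact eval_add _ _ _ _ _
      rw [h, tripleSum_add]
      exact add_nonneg (hL p (by simp)) (ih fun q hq => hL q (by simp [hq]))
  have hsq (g q : TriPoly) (hg : ∀ i j l, i ≠ j → 0 ≤ g.eval (w i j) (w i l) (w j l)) :
      0 ≤ tripleSum w (weightedSquare g q).eval := by
    have h := tripleSum_mono (w := w) (f := fun _ _ _ => 0) (g := (weightedSquare g q).eval)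
      fun i j l hij => by
        rw [weightedSquare, eval_mul, eval_mul]
        exact mul_nonneg (hg i j l hij) (mul_self_nonneg _)
    simpa [tripleSum] using h
  refine hlist _ fun p hp => ?_
  simp only [certificateTerms, List.mem_append] at hp
  rcases hp with (hp | hp) | hp
  · obtain ⟨d, -, rfl⟩ := List.mem_map.1 hp
    exact hw.tripleSum_kernelTerm_nonneg d
  · obtain ⟨q, -, rfl⟩ := List.mem_map.1 hp
    exact hsq _ _ fun i j l _ => by rw [eval_const]; norm_num
  · obtain ⟨q, -, rfl⟩ := List.mem_map.1 hp
    refine hsq _ _ fun i j l hij => ?_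
    have h : boxWeight.eval (w i j) (w i l) (w j l) = 11 * ((1 - 2 * w i j) * (1 + w i j)) := by
      simp [boxWeight, eval, evalList]; ring
    rw [h]
    have h1 := hle i j hij
    have h2 := neg_le_of_abs_le (hw.abs_le_one i j)
    exact mul_nonneg (by norm_num) (mul_nonneg (by linarith) (by linarith))

lemma exists_half_lt (hw : IsSphereGram w) : ∃ i j, i ≠ j ∧ 1 / 2 < w i j := by
  by_contra! h
  exact (tripleSum_certificate_neg hw.symm hw.abs_le_one).not_ge
    (hw.tripleSum_certificate_nonneg h)

end IsSphereGram

/-! ### The kissing number of three-dimensional space -/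

lemma isSphereGram_inner (x : Fin 13 → EuclideanSpace ℝ (Fin 3)) (hx : ∀ i, ‖x i‖ = 1) :
    IsSphereGram fun i j => inner ℝ (x i) (x j) where
  symm i j := real_inner_comm _ _
  diag i := by rw [real_inner_self_eq_norm_sq, hx]; norm_num
  exists_proj i := by
    obtain ⟨b, hb⟩ := Orthonormal.exists_orthonormalBasis_extension_of_card_eq (𝕜 := ℝ)
      (E := EuclideanSpace ℝ (Fin 3)) (ι := Fin 3) (by simp) (v := fun _ => x i) (s := {0})
      (by
        rw [orthonormal_iff_ite]
        rintro ⟨a, ha⟩ ⟨c, hc⟩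
        obtain rfl : a = 0 := ha
        obtain rfl : c = 0 := hc
        simp [hx])
    have hb0 : b 0 = x i := hb 0 rfl
    refine ⟨fun j => ⟨inner ℝ (b 1) (x j), inner ℝ (b 2) (x j)⟩, fun j l => ?_⟩
    have h := b.sum_inner_mul_inner (x j) (x l)
    rw [Fin.sum_univ_three, hb0, real_inner_comm (x i), real_inner_comm (b 1),
      real_inner_comm (b 2)] at h
    simp only [Complex.mul_re, Complex.conj_re, Complex.conj_im]
    linarith

/-- Among thirteen unit vectors in `ℝ³`, two enclose an angle of less than sixty degrees. -/
theorem exists_half_lt_inner (x : Fin 13 → EuclideanSpace ℝ (Fin 3)) (hx : ∀ i, ‖x i‖ = 1) :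
    ∃ i j, i ≠ j ∧ 1 / 2 < inner ℝ (x i) (x j) :=
  (isSphereGram_inner x hx).exists_half_lt

/-! ### Balls touching a smallest ball, and greedy colouring -/

/-- Two non-overlapping balls touching a ball that is not larger than either of them are seen from
its center under an angle of at least sixty degrees. -/
lemma inner_normalize_le_half {E : Type*} [NormedAddCommGroup E] [InnerProductSpace ℝ E]
    {o a b : E} {ρ r s : ℝ} (hρ : 0 < ρ) (hr : ρ ≤ r) (hs : ρ ≤ s)
    (ha : dist o a = ρ + r) (hb : dist o b = ρ + s) (hab : r + s ≤ dist a b) :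
    inner ℝ ((ρ + r)⁻¹ • (a - o)) ((ρ + s)⁻¹ • (b - o)) ≤ 1 / 2 := by
  rw [dist_comm, dist_eq_norm] at ha hb
  rw [dist_eq_norm, show a - b = (a - o) - (b - o) by abel] at hab
  have h := norm_sub_sq_real (a - o) (b - o)
  rw [ha, hb] at h
  have hsq : (r + s) ^ 2 ≤ ‖a - o - (b - o)‖ ^ 2 := by gcongr; linarith
  rw [real_inner_smul_left, real_inner_smul_right, ← mul_assoc, ← mul_inv,
    inv_mul_le_iff₀ (mul_pos (by linarith) (by linarith))]
  nlinarith [mul_nonneg (sub_nonneg.2 hr) (sub_nonneg.2 hs)]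

open Classical in
lemma card_touching_le {n : ℕ} {c : Fin n → EuclideanSpace ℝ (Fin 3)} {r : Fin n → ℝ}
    (hr : ∀ i, 0 < r i)
    (hsep : ∀ i j : Fin n, i ≠ j → r i + r j ≤ dist (c i) (c j)) {s : Finset (Fin n)} {i : Fin n}
    (hmin : ∀ j ∈ s, r i ≤ r j) :
    #{j ∈ s | dist (c i) (c j) = r i + r j} ≤ 12 := by
  by_contra! hcard
  obtain ⟨e⟩ : Nonempty (Fin 13 ↪ {j // j ∈ s.filter fun j => dist (c i) (c j) = r i + r j}) :=
    Function.Embedding.nonempty_of_card_le (by rwa [Fintype.card_fin, Fintype.card_coe])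
  have hmem (a) := mem_filter.1 (e a).2
  obtain ⟨a, b, hab, hlt⟩ := exists_half_lt_inner
    (fun a => (r i + r (e a))⁻¹ • (c (e a) - c i)) fun a => by
      have hpos := add_pos (hr i) (hr (e a))
      rw [norm_smul, ← dist_eq_norm, dist_comm, (hmem a).2, Real.norm_of_nonneg (by positivity),
        inv_mul_cancel₀ hpos.ne']
  have hne : (e a : Fin n) ≠ e b := fun h => hab (e.injective (Subtype.ext h))
  exact hlt.not_ge (inner_normalize_le_half (hr i) (hmin _ (hmem a).1) (hmin _ (hmem b).1)
    (hmem a).2 (hmem b).2 (hsep _ _ hne))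

lemma exists_coloring_on {n : ℕ} {c : Fin n → EuclideanSpace ℝ (Fin 3)} {r : Fin n → ℝ}
    (hr : ∀ i, 0 < r i)
    (hsep : ∀ i j : Fin n, i ≠ j → r i + r j ≤ dist (c i) (c j)) (s : Finset (Fin n)) :
    ∃ f : Fin n → Fin 13, ∀ i ∈ s, ∀ j ∈ s, i ≠ j → dist (c i) (c j) = r i + r j →
      f i ≠ f j := by
  classical
  induction s using Finset.strongInduction with
  | H s ih =>
    obtain rfl | hs := s.eq_empty_or_nonempty
    · exact ⟨0, by simp⟩
    obtain ⟨i, hi, hmin⟩ := s.exists_min_image r hs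
    obtain ⟨f, hf⟩ := ih _ (erase_ssubset hi)
    obtain ⟨x, hx⟩ : ∃ x, x ∉ (s.filter fun j => dist (c i) (c j) = r i + r j).image f := by
      by_contra! h
      have h1 := card_image_le (s := s.filter fun j => dist (c i) (c j) = r i + r j) (f := f)
      rw [eq_univ_of_forall h, card_univ, Fintype.card_fin] at h1
      have h2 := card_touching_le hr hsep hmin
      omega
    have hfresh (j) (hj : j ∈ s) (h : dist (c i) (c j) = r i + r j) : x ≠ f j := fun hxj =>
      hx (mem_image.2 ⟨j, mem_filter.2 ⟨hj, h⟩, hxj.symm⟩)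
    refine ⟨Function.update f i x, fun a ha b hb hab h => ?_⟩
    by_cases hai : a = i
    · subst hai
      rw [Function.update_self, Function.update_of_ne hab.symm]
      exact hfresh b hb h
    by_cases hbi : b = i
    · subst hbi
      rw [Function.update_self, Function.update_of_ne hab]
      exact (hfresh a ha (by rw [dist_comm, h, add_comm])).symm
    rw [Function.update_of_ne hai, Function.update_of_ne hbi]
    exact hf a (mem_erase.2 ⟨hai, ha⟩) b (mem_erase.2 ⟨hbi, hb⟩) hab h

end KissingThree

/-- `χ(3) ≤ 13`: every finite family of pairwise non-overlapping closed balls in `ℝ³` with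
positive radii admits a proper colouring with 13 colours. -/
theorem chi_three_le_thirteen (n : ℕ)
    (c : Fin n → EuclideanSpace ℝ (Fin 3)) (r : Fin n → ℝ)
    (hr : ∀ i, 0 < r i)
    (hsep : ∀ i j : Fin n, i ≠ j → r i + r j ≤ dist (c i) (c j)) :
    ∃ f : Fin n → Fin 13,
      ∀ i j : Fin n, i ≠ j → dist (c i) (c j) = r i + r j → f i ≠ f j := by
  obtain ⟨f, hf⟩ := KissingThree.exists_coloring_on hr hsep Finset.univ
  exact ⟨f, fun i j => hf i (Finset.mem_univ i) j (Finset.mem_univ j)⟩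
end
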